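/- arXiv:math/0604264 — 13 statements merged into one kernel-verified Lean document; each statement's English description precedes it below -/
import Mathlib

section
/- Let σ:[0,T]×ℝ→ℝ be jointly continuous and continuously differentiable in k, and suppose σ is an equilibrium strategy, i.e. for every (t,k)∈[0,T]×ℝ the consumption c=σ(t,k) maximizes c ↦ P₁(t,k,σ,c) over ℝ. Then the function V(t,k) := ∫ₜ^T h(s−t)·u(σ(s,K(s,t,k))) ds + h(T−t)·g(K(T,t,k)) satisfies the envelope identity u′(σ(t,k)) = ∂V/∂k(t,k) for all (t,k), and consequently V satisfies the integrated equilibrium equation (IE): V(t,k) = ∫ₜ^T h(s−t)·u(i(∂V/∂k(s,K(s,t,k)))) ds + h(T−t)·g(K(T,t,k)) for all (t,k). -/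
open MeasureTheory

/-- The first-order payoff perturbation `P₁(t,k,σ,c)` of the time-`t` decision-maker
deviating to consumption `c`, all other decision-makers applying the strategy `σ`
with flow `K` and linearized flow `R`. -/
noncomputable def P1 (h u g : ℝ → ℝ) (σ : ℝ → ℝ → ℝ) (K R : ℝ → ℝ → ℝ → ℝ)
    (T t k c : ℝ) : ℝ :=
  u c - u (σ t k) +
    ((∫ s in t..T, h (s - t) * deriv u (σ s (K s t k)) * deriv (σ s) (K s t k) * R s t k) +
      h (T - t) * deriv g (K T t k) * R T t k) * (σ t k - c)

/-- The value function `V(t,k)` associated with the strategy `σ` with flow `K`. -/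
noncomputable def valueFn (h u g : ℝ → ℝ) (σ : ℝ → ℝ → ℝ) (K : ℝ → ℝ → ℝ → ℝ)
    (T t k : ℝ) : ℝ :=
  (∫ s in t..T, h (s - t) * u (σ s (K s t k))) + h (T - t) * g (K T t k)

/-!
As a function of the deviation `c`, the payoff perturbation is `u c` minus a linear function whose
slope is the marginal value of capital along the flow, so the first-order condition at its
maximizer `σ t k` equates marginal utility with that slope. Differentiating under the integral sign
identifies the slope with `∂V/∂k`. Inverting `u'` then gives `σ = i(∂V/∂k)` at every state, and
(IE) says that `V` is the value function of the feedback strategy it induces.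
-/

/-- The marginal value of capital at `(t, k)`: the slope, in the deviation `c`, of the linear
loss term of `P₁(t,k,σ,c)`. The weight `R` stands for `∂K/∂k`, so that this is formally the
`k`-derivative of `valueFn`. -/
noncomputable def marginalValue (h u g : ℝ → ℝ) (σ : ℝ → ℝ → ℝ) (K R : ℝ → ℝ → ℝ → ℝ)
    (T t k : ℝ) : ℝ :=
  (∫ s in t..T, h (s - t) * deriv u (σ s (K s t k)) * deriv (σ s) (K s t k) * R s t k) +
    h (T - t) * deriv g (K T t k) * R T t k

/-- The feedback strategy `(t, k) ↦ i(∂V/∂k(t,k))` induced by a function `V` of time and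
capital, where `i` is meant as an inverse of marginal utility. -/
noncomputable def feedbackStrategy (i : ℝ → ℝ) (V : ℝ → ℝ → ℝ) (t k : ℝ) : ℝ :=
  i (deriv (V t) k)

section

variable {h u i g : ℝ → ℝ} {σ : ℝ → ℝ → ℝ} {K R : ℝ → ℝ → ℝ → ℝ} {T t k : ℝ}

theorem hasDerivAt_P1 {c u' : ℝ} (hu : HasDerivAt u u' c) :
    HasDerivAt (P1 h u g σ K R T t k) (u' - marginalValue h u g σ K R T t k) c := by
  have hloss := ((hasDerivAt_id c).const_sub (σ t k)).const_mul (marginalValue h u g σ K R T t k)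
  exact ((hu.sub_const (u (σ t k))).add hloss).congr_deriv (by ring)

theorem deriv_eq_marginalValue_of_isLocalMax_P1 {c : ℝ} (hu : DifferentiableAt ℝ u c)
    (hmax : IsLocalMax (P1 h u g σ K R T t k) c) :
    deriv u c = marginalValue h u g σ K R T t k :=
  sub_eq_zero.mp (hmax.hasDerivAt_eq_zero (hasDerivAt_P1 hu.hasDerivAt))

theorem deriv_eq_deriv_valueFn_of_isLocalMax_P1 {c : ℝ} (hu : DifferentiableAt ℝ u c)
    (hV : HasDerivAt (valueFn h u g σ K T t) (marginalValue h u g σ K R T t k) k)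
    (hmax : IsLocalMax (P1 h u g σ K R T t k) c) :
    deriv u c = deriv (valueFn h u g σ K T t) k :=
  (deriv_eq_marginalValue_of_isLocalMax_P1 hu hmax).trans hV.deriv.symm

theorem feedbackStrategy_eq_of_deriv_eq {V : ℝ → ℝ → ℝ} {c : ℝ}
    (hi : Function.LeftInverse i (deriv u)) (henv : deriv u c = deriv (V t) k) :
    feedbackStrategy i V t k = c := by
  rw [feedbackStrategy, ← henv, hi c]

theorem valueFn_congr_strategy {σ' : ℝ → ℝ → ℝ}
    (hσ : ∀ s ∈ Set.uIcc t T, σ s (K s t k) = σ' s (K s t k)) :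
    valueFn h u g σ K T t k = valueFn h u g σ' K T t k := by
  unfold valueFn
  congr 1
  exact intervalIntegral.integral_congr fun s hs ↦ by simp only [hσ s hs]

theorem stmt0_general {a : ℝ} (hu : Differentiable ℝ u) (hi : Function.LeftInverse i (deriv u))
    (hKk : ∀ s t k : ℝ, HasDerivAt (fun x ↦ K s t x) (R s t k) k)
    (hint1 : ∀ t ∈ Set.Icc a T, ∀ k : ℝ,
      IntervalIntegrable (fun s ↦ h (s - t) * u (σ s (K s t k))) volume t T)
    (hint2 : ∀ t ∈ Set.Icc a T, ∀ k : ℝ,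
      IntervalIntegrable
        (fun s ↦ h (s - t) * deriv u (σ s (K s t k)) * deriv (σ s) (K s t k) * R s t k)
        volume t T)
    (hVk : ∀ t ∈ Set.Icc a T, ∀ k : ℝ,
      HasDerivAt (valueFn h u g σ K T t) (marginalValue h u g σ K R T t k) k)
    (hmax : ∀ t ∈ Set.Icc a T, ∀ k : ℝ, IsLocalMax (P1 h u g σ K R T t k) (σ t k)) :
    ∀ t ∈ Set.Icc a T, ∀ k : ℝ,
      deriv u (σ t k) = deriv (valueFn h u g σ K T t) k ∧
      valueFn h u g σ K T t k =
        valueFn h u g (feedbackStrategy i (valueFn h u g σ K T)) K T t k ∧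
      IntervalIntegrable
        (fun s ↦ h (s - t) * u (feedbackStrategy i (valueFn h u g σ K T) s (K s t k)))
        volume t T := by
  have henv : ∀ t ∈ Set.Icc a T, ∀ k : ℝ,
      deriv u (σ t k) = deriv (valueFn h u g σ K T t) k := fun t ht k ↦
    deriv_eq_deriv_valueFn_of_isLocalMax_P1 (hu _) (hVk t ht k) (hmax t ht k)
  intro t ht k
  have hfeedback : ∀ s ∈ Set.uIcc t T,
      σ s (K s t k) = feedbackStrategy i (valueFn h u g σ K T) s (K s t k) := fun s hs ↦ by
    rw [Set.uIcc_of_le ht.2] at hs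
    exact (feedbackStrategy_eq_of_deriv_eq hi (henv s ⟨ht.1.trans hs.1, hs.2⟩ (K s t k))).symm
  refine ⟨henv t ht k, valueFn_congr_strategy hfeedback, (hint1 t ht k).congr fun s hs ↦ ?_⟩
  simp only [hfeedback s (Set.uIoc_subset_uIcc hs)]

end

/-- If `σ` is an equilibrium strategy, then its value function `V`
satisfies the envelope identity `u′(σ(t,k)) = ∂V/∂k(t,k)` and the integrated
equilibrium equation (IE). -/
theorem stmt0
    (T : ℝ) (hT : 0 < T)
    (h u i g : ℝ → ℝ) (f : ℝ → ℝ → ℝ)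
    -- the discount function
    (hh : ContDiff ℝ 1 h) (hh0 : h 0 = 1) (hhpos : ∀ t ≥ (0 : ℝ), 0 ≤ h t)
    (hh' : ∀ t ≥ (0 : ℝ), deriv h t ≤ 0)
    -- the utility function and the inverse `i` of its derivative
    (hu : ContDiff ℝ 2 u) (huconc : StrictConcaveOn ℝ Set.univ u)
    (hi : ContDiff ℝ 1 i) (hinv : ∀ c x : ℝ, deriv u c = x ↔ c = i x)
    -- the production function and the terminal utility
    (hf : ContDiff ℝ 2 (Function.uncurry f))
    (hfconc : ∀ t ∈ Set.Icc (0 : ℝ) T, StrictConcaveOn ℝ Set.univ (f t))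
    (hg : ContDiff ℝ 2 g)
    -- the strategy: jointly continuous, continuously differentiable in `k`
    (σ : ℝ → ℝ → ℝ) (hσc : Continuous (Function.uncurry σ))
    (hσk : ∀ t, ContDiff ℝ 1 (σ t))
    -- the flow `K` of the strategy and its linearization `R`
    (K R : ℝ → ℝ → ℝ → ℝ)
    (hKinit : ∀ t k : ℝ, K t t k = k)
    (hKode : ∀ t k s : ℝ, HasDerivAt (fun s' => K s' t k)
      (f s (K s t k) - σ s (K s t k)) s)
    (hKk : ∀ s t k : ℝ, HasDerivAt (fun x => K s t x) (R s t k) k)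
    (hRinit : ∀ t k : ℝ, R t t k = 1)
    (hRode : ∀ t k s : ℝ, HasDerivAt (fun s' => R s' t k)
      ((deriv (f s) (K s t k) - deriv (σ s) (K s t k)) * R s t k) s)
    -- integrability of all integrals appearing
    (hint1 : ∀ t ∈ Set.Icc (0 : ℝ) T, ∀ k : ℝ,
      IntervalIntegrable (fun s => h (s - t) * u (σ s (K s t k))) volume t T)
    (hint2 : ∀ t ∈ Set.Icc (0 : ℝ) T, ∀ k : ℝ,
      IntervalIntegrable
        (fun s => h (s - t) * deriv u (σ s (K s t k)) * deriv (σ s) (K s t k) * R s t k)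
        volume t T)
    -- differentiation under the integral sign in `k` is assumed valid
    (hVk : ∀ t ∈ Set.Icc (0 : ℝ) T, ∀ k : ℝ,
      HasDerivAt (fun x => valueFn h u g σ K T t x)
        ((∫ s in t..T, h (s - t) * deriv u (σ s (K s t k)) * deriv (σ s) (K s t k) * R s t k) +
          h (T - t) * deriv g (K T t k) * R T t k) k)
    -- `σ` is an equilibrium strategy: `σ t k` maximizes `c ↦ P₁(t,k,σ,c)`
    (heq : ∀ t ∈ Set.Icc (0 : ℝ) T, ∀ k c : ℝ,
      P1 h u g σ K R T t k c ≤ P1 h u g σ K R T t k (σ t k)) :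
    ∀ t ∈ Set.Icc (0 : ℝ) T, ∀ k : ℝ,
      deriv u (σ t k) = deriv (fun x => valueFn h u g σ K T t x) k ∧
      valueFn h u g σ K T t k =
        (∫ s in t..T,
          h (s - t) * u (i (deriv (fun x => valueFn h u g σ K T s x) (K s t k)))) +
          h (T - t) * g (K T t k) :=
  fun t ht k ↦ (stmt0_general (hu.differentiable two_ne_zero) (fun c ↦ ((hinv c _).mp rfl).symm)
    hKk hint1 hint2 hVk (fun t ht k ↦ .of_forall (heq t ht k)) t ht k).imp_right And.left
end

section
/- Let V:[0,T]×ℝ→ℝ be twice continuously differentiable, set σ := i∘(∂V/∂k), and let K be the flow of σ, satisfying in addition the semigroup property K(x,s,K(s,t,k)) = K(x,t,k) for 0≤t≤s≤x≤T. Then V satisfies the integrated equilibrium equation (IE) — V(t,k) = ∫ₜ^T h(s−t)·u(σ(s,K(s,t,k))) ds + h(T−t)·g(K(T,t,k)) for all (t,k) — if and only if V satisfies the differentiated equilibrium equation (DE): ∂V/∂t(t,k) + ∫ₜ^T h′(s−t)·u(σ(s,K(s,t,k))) ds + h′(T−t)·g(K(T,t,k)) + ũ(∂V/∂k(t,k))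 + ∂V/∂k(t,k)·f(t,k) = 0 for all (t,k)∈[0,T]×ℝ, together with the boundary condition V(T,k) = g(k) for all k. -/
open MeasureTheory

/-!
Parametrise the trajectories of the flow by their capital at the horizon `T`. Since solutions of the
flow equation are unique, the integrated payoff seen from the point `(s, K s T k)` of a trajectory
involves that same trajectory only, so it is an explicit function of `s` whose derivative, by the
Leibniz rule, is minus the running utility minus the same payoff with `h'` in place of `h`. Along a
trajectory, (IE) is therefore an equality of two differentiable functions of `s`, and (DE) with the
boundary condition says that their derivatives agree and that they coincide at `T`. The trajectories
fill `[0, T] × ℝ`.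
-/

section Calculus

open Set

variable {F : Type*} [NormedAddCommGroup F]

theorem hasDerivAt_intervalIntegral_of_continuous [NormedSpace ℝ F] {Φ Φ' : ℝ → ℝ → F}
    (hΦ : ∀ s, Continuous (Φ s)) (hΦ' : Continuous (Function.uncurry Φ'))
    (hderiv : ∀ s x, HasDerivAt (fun r => Φ r x) (Φ' s x) s) (a b s : ℝ) :
    HasDerivAt (fun r => ∫ x in a..b, Φ r x) (∫ x in a..b, Φ' s x) s := by
  obtain ⟨C, hC⟩ := ((isCompact_closedBall s 1).prod isCompact_uIcc).exists_bound_of_continuousOn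
    (hΦ'.continuousOn (s := Metric.closedBall s 1 ×ˢ uIcc a b))
  have hbound : ∀ᵐ x, x ∈ uIoc a b → ∀ r ∈ Metric.closedBall s 1, ‖Φ' r x‖ ≤ C :=
    ae_of_all _ fun x hx r hr => hC (r, x) ⟨hr, uIoc_subset_uIcc hx⟩
  exact (intervalIntegral.hasDerivAt_integral_of_dominated_loc_of_deriv_le
    (Metric.closedBall_mem_nhds s one_pos)
    (.of_forall fun r => (hΦ r).aestronglyMeasurable) ((hΦ s).intervalIntegrable a b)
    (hΦ'.comp (Continuous.prodMk_right s)).aestronglyMeasurable hbound intervalIntegrable_const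
    (ae_of_all _ fun x _ r _ => hderiv r x)).2

theorem hasDerivAt_intervalIntegral_right_of_continuous [NormedSpace ℝ F] [CompleteSpace F]
    {Φ Φ' : ℝ → ℝ → F} (hΦ : Continuous (Function.uncurry Φ))
    (hΦ' : Continuous (Function.uncurry Φ'))
    (hderiv : ∀ s x, HasDerivAt (fun r => Φ r x) (Φ' s x) s) (a s : ℝ) :
    HasDerivAt (fun r => ∫ x in a..r, Φ r x) (Φ s s + ∫ x in a..s, Φ' s x) s := by
  have hΦs (r : ℝ) : Continuous (Φ r) := hΦ.comp (Continuous.prodMk_right r)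
  have hupper (b r : ℝ) : HasDerivAt (fun b => ∫ x in a..b, Φ r x) (Φ r b) b :=
    ((hΦs r).integral_hasStrictDerivAt a b).hasDerivAt
  have hparam (b r : ℝ) : HasDerivAt (fun r => ∫ x in a..b, Φ r x) (∫ x in a..b, Φ' r x) r :=
    hasDerivAt_intervalIntegral_of_continuous hΦs hΦ' hderiv a b r
  have hΦswap : Continuous fun p : ℝ × ℝ => Φ p.2 p.1 := hΦ.comp continuous_swap
  have hΦ'int : Continuous fun p : ℝ × ℝ => ∫ x in a..p.1, Φ' p.2 x := by fun_prop
  have hspan := (ContinuousLinearMap.toSpanSingletonCLE (𝕜 := ℝ) (E := F)).continuous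
  have hjoint := hasStrictFDerivAt_uncurry_coprod (u := (s, s))
    (f := fun b r => ∫ x in a..b, Φ r x)
    (f₁ := fun b r => .toSpanSingleton ℝ (Φ r b))
    (f₂ := fun b r => .toSpanSingleton ℝ (∫ x in a..b, Φ' r x))
    (.of_forall fun p => (hupper p.1 p.2).hasFDerivAt)
    (.of_forall fun p => (hparam p.1 p.2).hasFDerivAt)
    (hspan.comp hΦswap).continuousAt (hspan.comp hΦ'int).continuousAt
  have hdiag : HasDerivAt (fun r : ℝ => (r, r)) (1, 1) s :=
    (hasDerivAt_id s).prodMk (hasDerivAt_id s)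
  simpa [Function.HasUncurry.uncurry] using!
    hjoint.hasFDerivAt.comp_hasDerivAt (f := fun r : ℝ => (r, r)) s hdiag

theorem eqOn_iff_eqOn_deriv_and_eq [NormedSpace ℝ F] {φ ψ φ' ψ' : ℝ → F} {S : Set ℝ} {x : ℝ}
    (hS : Convex ℝ S) (hunique : UniqueDiffOn ℝ S) (hx : x ∈ S)
    (hφ : ∀ s ∈ S, HasDerivWithinAt φ (φ' s) S s) (hψ : ∀ s ∈ S, HasDerivWithinAt ψ (ψ' s) S s) :
    EqOn φ ψ S ↔ EqOn φ' ψ' S ∧ φ x = ψ x := by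
  refine ⟨fun h => ⟨fun s hs => ?_, h hx⟩, fun ⟨hderiv, heq⟩ s hs => ?_⟩
  · exact (hunique s hs).eq_deriv _ ((hφ s hs).congr_of_mem h.symm hs) (hψ s hs)
  · have hdiff : ∀ s ∈ S, HasDerivWithinAt (φ - ψ) 0 S s := fun s hs => by
      simpa [hderiv hs] using (hφ s hs).sub (hψ s hs)
    have hconst := hS.norm_image_sub_le_of_norm_hasDerivWithin_le (C := 0) hdiff (by simp) hx hs
    simpa [heq, sub_eq_zero] using hconst

theorem hasDerivAt_uncurry_comp {E : Type*} [NormedAddCommGroup E] [NormedSpace ℝ E]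
    [NormedSpace ℝ F] {V : ℝ → E → F} {γ : ℝ → E} {w : E} {s : ℝ}
    (hV : DifferentiableAt ℝ (Function.uncurry V) (s, γ s)) (hγ : HasDerivAt γ w s) :
    HasDerivAt (fun r => V r (γ r)) (fderiv ℝ (Function.uncurry V) (s, γ s) (1, w)) s :=
  hV.hasFDerivAt.comp_hasDerivAt (f := fun r => (r, γ r)) s ((hasDerivAt_id s).prodMk hγ)

variable {𝕜 : Type*} [NontriviallyNormedField 𝕜] [NormedSpace 𝕜 F] {V : 𝕜 → 𝕜 → F}

theorem fderiv_uncurry_apply {t k : 𝕜} (hV : DifferentiableAt 𝕜 (Function.uncurry V) (t, k))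
    (a b : 𝕜) :
    fderiv 𝕜 (Function.uncurry V) (t, k) (a, b) =
      a • deriv (fun s => V s k) t + b • deriv (V t) k := by
  have ht : HasDerivAt (fun s => V s k) (fderiv 𝕜 (Function.uncurry V) (t, k) (1, 0)) t :=
    hV.hasFDerivAt.comp_hasDerivAt (f := fun s => (s, k)) t
      ((hasDerivAt_id t).prodMk (hasDerivAt_const t k))
  have hk : HasDerivAt (V t) (fderiv 𝕜 (Function.uncurry V) (t, k) (0, 1)) k :=
    hV.hasFDerivAt.comp_hasDerivAt k ((hasDerivAt_const k t).prodMk (hasDerivAt_id k))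
  rw [ht.deriv, hk.deriv, ← map_smul, ← map_smul, ← map_add]
  simp

theorem contDiff_deriv_of_contDiff_uncurry {m n : WithTop ℕ∞}
    (hV : ContDiff 𝕜 m (Function.uncurry V)) (hnm : n + 1 ≤ m) :
    ContDiff 𝕜 n fun p : 𝕜 × 𝕜 => deriv (V p.1) p.2 :=
  (ContDiff.fderiv (f := fun p : 𝕜 × 𝕜 => V p.1) (by fun_prop) contDiff_snd hnm).clm_apply
    contDiff_const

end Calculus

section Flow

variable {E : Type*} [NormedAddCommGroup E] [NormedSpace ℝ E] {v : ℝ → E → E}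

theorem isIntegralCurve_eq_of_locallyLipschitz (hv : LocallyLipschitz (Function.uncurry v))
    {γ γ' : ℝ → E} (hγ : IsIntegralCurve γ v) (hγ' : IsIntegralCurve γ' v) {t₀ : ℝ}
    (h₀ : γ t₀ = γ' t₀) : γ = γ' := by
  have hclosed : IsClosed {t | γ t = γ' t} := isClosed_eq hγ.continuous hγ'.continuous
  have hopen : IsOpen {t | γ t = γ' t} := isOpen_iff_mem_nhds.2 fun t ht => by
    obtain ⟨L, U, hU, hL⟩ := hv (t, γ t)
    have hstay {δ : ℝ → E} (hδ : IsIntegralCurve δ v) (h : δ t = γ t) :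
        ∀ᶠ s in nhds t, (s, δ s) ∈ U :=
      (continuous_id.prodMk hδ.continuous).continuousAt (by simpa [h] using hU)
    have hlip (s : ℝ) : LipschitzOnWith L (v s) {y | (s, y) ∈ U} := fun y hy z hz => by
      simpa [Prod.edist_eq] using hL hy hz
    exact ODE_solution_unique_of_eventually (.of_forall hlip)
      ((hstay hγ rfl).mono fun s hs => ⟨hγ s, hs⟩)
      ((hstay hγ' ht.symm).mono fun s hs => ⟨hγ' s, hs⟩) ht
  have huniv := IsClopen.eq_univ ⟨hclosed, hopen⟩ ⟨t₀, h₀⟩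
  exact funext fun t => huniv.ge (Set.mem_univ t)

/-- `K` is the flow of the time-dependent vector field `v`: `K s t k` is the state at time `s` of
the trajectory passing through `k` at time `t`. -/
structure IsFlow (v : ℝ → E → E) (K : ℝ → ℝ → E → E) : Prop where
  apply_self : ∀ t k, K t t k = k
  isIntegralCurve : ∀ t k, IsIntegralCurve (fun s => K s t k) v

namespace IsFlow

variable {K : ℝ → ℝ → E → E}

theorem apply_apply (hK : IsFlow v K) (hv : LocallyLipschitz (Function.uncurry v))
    (x s t : ℝ) (k : E) : K x s (K s t k) = K x t k :=
  congrFun (isIntegralCurve_eq_of_locallyLipschitz hv (hK.isIntegralCurve s (K s t k))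
    (hK.isIntegralCurve t k) (hK.apply_self s (K s t k))) x

theorem surjective (hK : IsFlow v K) (hv : LocallyLipschitz (Function.uncurry v)) (s t : ℝ) :
    Function.Surjective (K s t) := fun k =>
  ⟨K t s k, by rw [hK.apply_apply hv, hK.apply_self]⟩

theorem forall_iff_forall_trajectory (hK : IsFlow v K)
    (hv : LocallyLipschitz (Function.uncurry v)) (t : ℝ) {S : Set ℝ} {P : ℝ → E → Prop} :
    (∀ s ∈ S, ∀ k, P s k) ↔ ∀ k, ∀ s ∈ S, P s (K s t k) := by
  rw [forall₂_congr fun s _ => (hK.surjective hv s t).forall]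
  tauto

end IsFlow

end Flow

section Payoff

/-- The value at time `t` of a stream `c` received until the horizon `T` and a lump sum `b` received
at `T`, discounted by `h`. Both equations of the theorem use it, (DE) with `deriv h` as `h`. -/
noncomputable def discountedPayoff (h : ℝ → ℝ) (T : ℝ) (c : ℝ → ℝ) (b t : ℝ) : ℝ :=
  (∫ s in t..T, h (s - t) * c s) + h (T - t) * b

theorem discountedPayoff_self (h : ℝ → ℝ) (T : ℝ) (c : ℝ → ℝ) (b : ℝ) :
    discountedPayoff h T c b T = h 0 * b := by
  simp [discountedPayoff]

theorem hasDerivAt_discountedPayoff {h c : ℝ → ℝ} (hh : ContDiff ℝ 1 h) (hc : Continuous c)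
    (T b t : ℝ) :
    HasDerivAt (discountedPayoff h T c b)
      (-(h 0 * c t) - discountedPayoff (deriv h) T c b t) t := by
  have hderiv (x s : ℝ) : HasDerivAt (fun r => h (x - r)) (-deriv h (x - s)) s :=
    (hh.differentiable one_ne_zero (x - s)).hasDerivAt.comp_const_sub x s
  have : Continuous (deriv h) := hh.continuous_deriv_one
  have hint := hasDerivAt_intervalIntegral_right_of_continuous
    (Φ := fun s x => h (x - s) * c x) (Φ' := fun s x => -deriv h (x - s) * c x)
    (by fun_prop) (by fun_prop) (fun s x => (hderiv x s).mul_const (c x)) T t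
  unfold discountedPayoff
  simp_rw [intervalIntegral.integral_symm T]
  refine (hint.neg.add ((hderiv T t).mul_const b)).congr_deriv ?_
  simp only [sub_self, neg_mul, intervalIntegral.integral_neg]
  ring

variable {E : Type*}

/-- The discounted payoff, from time `t` and state `k` on, of the trajectory of `K` through `k`,
with running utility `ℓ` and terminal utility `g`. -/
noncomputable def flowPayoff (h : ℝ → ℝ) (T : ℝ) (ℓ : ℝ → E → ℝ) (g : E → ℝ)
    (K : ℝ → ℝ → E → E) (t : ℝ) (k : E) : ℝ :=
  discountedPayoff h T (fun s => ℓ s (K s t k)) (g (K T t k)) t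

variable [NormedAddCommGroup E] [NormedSpace ℝ E] {v : ℝ → E → E} {K : ℝ → ℝ → E → E}

theorem IsFlow.flowPayoff_apply (hK : IsFlow v K) (hv : LocallyLipschitz (Function.uncurry v))
    (h : ℝ → ℝ) (T : ℝ) (ℓ : ℝ → E → ℝ) (g : E → ℝ) (s : ℝ) (k : E) :
    flowPayoff h T ℓ g K s (K s T k) = discountedPayoff h T (fun x => ℓ x (K x T k)) (g k) s := by
  simp only [flowPayoff, hK.apply_apply hv, hK.apply_self]

theorem IsFlow.eq_flowPayoff_iff (hK : IsFlow v K) (hv : LocallyLipschitz (Function.uncurry v))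
    {a T : ℝ} (haT : a < T) {h : ℝ → ℝ} (hh : ContDiff ℝ 1 h) (hh0 : h 0 = 1)
    {ℓ : ℝ → E → ℝ} (hℓ : Continuous (Function.uncurry ℓ)) (g : E → ℝ)
    {V : ℝ → E → ℝ} (hV : Differentiable ℝ (Function.uncurry V)) :
    (∀ t ∈ Set.Icc a T, ∀ k, V t k = flowPayoff h T ℓ g K t k) ↔
      (∀ t ∈ Set.Icc a T, ∀ k, fderiv ℝ (Function.uncurry V) (t, k) (1, v t k) =
        -ℓ t k - flowPayoff (deriv h) T ℓ g K t k) ∧ ∀ k, V T k = g k := by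
  have hpath (k : E) : Continuous fun s => K s T k := (hK.isIntegralCurve T k).continuous
  have hℓpath (k : E) : Continuous fun s => ℓ s (K s T k) :=
    hℓ.comp (continuous_id.prodMk (hpath k))
  have hpayoff (k : E) (s : ℝ) :=
    hasDerivAt_discountedPayoff hh (hℓpath k) T (g k) s
  have hvalue (k : E) (s : ℝ) :=
    hasDerivAt_uncurry_comp (hV (s, K s T k)) (hK.isIntegralCurve T k s)
  rw [hK.forall_iff_forall_trajectory hv T, hK.forall_iff_forall_trajectory hv T, ← forall_and]
  refine forall_congr' fun k => ?_
  have halong := eqOn_iff_eqOn_deriv_and_eq (convex_Icc a T) (uniqueDiffOn_Icc haT)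
    (Set.right_mem_Icc.2 haT.le) (fun s _ => (hvalue k s).hasDerivWithinAt)
    (fun s _ => (hpayoff k s).hasDerivWithinAt)
  simpa only [Set.EqOn, hK.flowPayoff_apply hv, hK.apply_self, discountedPayoff_self, hh0, one_mul]
    using halong

end Payoff

theorem stmt2_general {T : ℝ} (hT : 0 < T) {h u i g : ℝ → ℝ} {f : ℝ → ℝ → ℝ}
    (hh : ContDiff ℝ 1 h) (hh0 : h 0 = 1) (hu : Continuous u) (hi : ContDiff ℝ 1 i)
    (hf : ContDiff ℝ 1 (Function.uncurry f))
    {V : ℝ → ℝ → ℝ} (hV : ContDiff ℝ 2 (Function.uncurry V))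
    {σ : ℝ → ℝ → ℝ} (hσ : ∀ t k : ℝ, σ t k = i (deriv (V t) k))
    {K : ℝ → ℝ → ℝ → ℝ} (hK : IsFlow (fun t k => f t k - σ t k) K) :
    (∀ t ∈ Set.Icc (0 : ℝ) T, ∀ k : ℝ,
      V t k = (∫ s in t..T, h (s - t) * u (σ s (K s t k))) + h (T - t) * g (K T t k))
    ↔
    ((∀ t ∈ Set.Icc (0 : ℝ) T, ∀ k : ℝ,
        deriv (fun s => V s k) t
          + (∫ s in t..T, deriv h (s - t) * u (σ s (K s t k)))
          + deriv h (T - t) * g (K T t k)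
          + (u (i (deriv (V t) k)) - deriv (V t) k * i (deriv (V t) k))
          + deriv (V t) k * f t k = 0) ∧
      (∀ k : ℝ, V T k = g k)) := by
  have hσsmooth : ContDiff ℝ 1 (Function.uncurry σ) := by
    rw [funext₂ hσ]
    exact hi.comp (contDiff_deriv_of_contDiff_uncurry hV one_add_one_eq_two.le)
  have hVdiff : Differentiable ℝ (Function.uncurry V) := hV.differentiable two_ne_zero
  refine (hK.eq_flowPayoff_iff (hf.sub hσsmooth).locallyLipschitz hT hh hh0
    (ℓ := fun t k => u (σ t k)) (hu.comp hσsmooth.continuous) g hVdiff).trans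
    (and_congr_left' (forall₂_congr fun t _ => forall_congr' fun k => ?_))
  rw [fderiv_uncurry_apply (hVdiff (t, k)), ← sub_eq_zero, hσ t k]
  refine Eq.congr_left ?_
  simp only [flowPayoff, discountedPayoff, smul_eq_mul]
  ring

/-- For a `C²` function `V` with induced strategy `σ = i ∘ ∂V/∂k` and
flow `K` (satisfying the semigroup property), the integrated equilibrium equation (IE)
holds if and only if the differentiated equilibrium equation (DE) holds together with
the boundary condition `V(T,k) = g(k)`.  Here `ũ(x) = u(i(x)) − x·i(x)` is the
Legendre–Fenchel transform of `u`. -/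
theorem stmt2
    (T : ℝ) (hT : 0 < T)
    (h u i g : ℝ → ℝ) (f : ℝ → ℝ → ℝ)
    -- the discount function
    (hh : ContDiff ℝ 1 h) (hh0 : h 0 = 1) (hhpos : ∀ t ≥ (0 : ℝ), 0 ≤ h t)
    (hh' : ∀ t ≥ (0 : ℝ), deriv h t ≤ 0)
    -- the utility function and the inverse `i` of its derivative
    (hu : ContDiff ℝ 2 u) (huconc : StrictConcaveOn ℝ Set.univ u)
    (hi : ContDiff ℝ 1 i) (hinv : ∀ c x : ℝ, deriv u c = x ↔ c = i x)
    -- the production function and the terminal utility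
    (hf : ContDiff ℝ 2 (Function.uncurry f))
    (hfconc : ∀ t ∈ Set.Icc (0 : ℝ) T, StrictConcaveOn ℝ Set.univ (f t))
    (hg : ContDiff ℝ 2 g)
    -- the value function `V` and the induced strategy `σ = i ∘ ∂V/∂k`
    (V : ℝ → ℝ → ℝ) (hV : ContDiff ℝ 2 (Function.uncurry V))
    (σ : ℝ → ℝ → ℝ) (hσ : ∀ t k : ℝ, σ t k = i (deriv (V t) k))
    -- the flow `K` of the strategy, with the semigroup property
    (K : ℝ → ℝ → ℝ → ℝ)
    (hKinit : ∀ t k : ℝ, K t t k = k)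
    (hKode : ∀ t k s : ℝ, HasDerivAt (fun s' => K s' t k)
      (f s (K s t k) - σ s (K s t k)) s)
    (hsemi : ∀ t s x k : ℝ, 0 ≤ t → t ≤ s → s ≤ x → x ≤ T →
      K x s (K s t k) = K x t k)
    -- all the integrals appearing are assumed finite
    (hint1 : ∀ t ∈ Set.Icc (0 : ℝ) T, ∀ k : ℝ,
      IntervalIntegrable (fun s => h (s - t) * u (σ s (K s t k))) volume t T)
    (hint2 : ∀ t ∈ Set.Icc (0 : ℝ) T, ∀ k : ℝ,
      IntervalIntegrable (fun s => deriv h (s - t) * u (σ s (K s t k))) volume t T)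
    -- interchange of differentiation and integration is assumed valid
    (hLeibniz : ∀ t ∈ Set.Icc (0 : ℝ) T, ∀ k : ℝ, ∀ s ∈ Set.Icc (0 : ℝ) T,
      HasDerivAt (fun s' => ∫ x in s'..T, h (x - s') * u (σ x (K x t k)))
        (-(h 0 * u (σ s (K s t k))) -
          ∫ x in s..T, deriv h (x - s) * u (σ x (K x t k))) s) :
    -- (IE)
    (∀ t ∈ Set.Icc (0 : ℝ) T, ∀ k : ℝ,
      V t k = (∫ s in t..T, h (s - t) * u (σ s (K s t k))) + h (T - t) * g (K T t k))
    ↔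
    -- (DE) together with the boundary condition (BC)
    ((∀ t ∈ Set.Icc (0 : ℝ) T, ∀ k : ℝ,
        deriv (fun s => V s k) t
          + (∫ s in t..T, deriv h (s - t) * u (σ s (K s t k)))
          + deriv h (T - t) * g (K T t k)
          + (u (i (deriv (V t) k)) - deriv (V t) k * i (deriv (V t) k))
          + deriv (V t) k * f t k = 0) ∧
      (∀ k : ℝ, V T k = g k)) := by
  exact stmt2_general hT hh hh0 hu.continuous hi (hf.of_le one_le_two) hV hσ ⟨hKinit, hKode⟩
end

section
/- Let r, w, λ:[0,∞)→ℝ be continuous, and assume that for every t≥0 the integral W(t) := ∫ₜ^∞ exp(−∫ₜ^u r(x)dx)·w(u) du converges. Fix t≥0 and k∈ℝ, and define K(s) := exp(∫ₜ^s (r(x)−λ(x))dx)·(k + W(t)) − W(s) for s≥t. Then K(t)=k and K solves the ordinary differential equation dK/ds = w(s) + r(s)·K(s) − λ(s)·(K(s) + W(s)) for all s≥t; that is, K is the flow of the consumption-saving dynamics under the strategy σ(s,k) = λ(s)·(k + W(s)). -/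
open MeasureTheory

/-!
Discounting to a fixed date `a` instead of the moving date `s` turns the improper integral `W s`
into `exp (∫ₐˢ r) • (W a - ∫ₐˢ D(a, u) • w u du)`, with `D` the discount factor. Here `s` occurs
only as an endpoint of integrals, so the fundamental theorem of calculus gives `W' = r W - w`. As
`K + W` grows at rate `r - λ` by construction, subtracting the two linear equations gives the one
for `K`.
-/

section

open Filter Set Topology

variable {E : Type*} [NormedAddCommGroup E]

theorem intervalIntegrable_of_locallyIntegrable {f : ℝ → E} (hf : LocallyIntegrable f) (a b : ℝ) :
    IntervalIntegrable f volume a b :=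
  (hf.integrableOn_isCompact isCompact_uIcc).intervalIntegrable

theorem integrableOn_Ioi_of_locallyIntegrable {f : ℝ → E} (hf : LocallyIntegrable f) {a : ℝ}
    (hfa : IntegrableOn f (Ioi a)) (b : ℝ) : IntegrableOn f (Ioi b) :=
  ((hf.integrableOn_isCompact isCompact_Icc).union hfa).mono_set fun x (hx : b < x) =>
    (le_or_gt x a).imp (fun hxa => ⟨hx.le, hxa⟩) id

variable [NormedSpace ℝ E]

theorem hasDerivAt_integral_of_locallyIntegrable [CompleteSpace E] {f : ℝ → E}
    (hf : LocallyIntegrable f) {s : ℝ} (hs : ContinuousAt f s) (a : ℝ) :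
    HasDerivAt (fun b => ∫ x in a..b, f x) (f s) s :=
  intervalIntegral.integral_hasDerivAt_right (intervalIntegrable_of_locallyIntegrable hf a s)
    hf.aestronglyMeasurable.stronglyMeasurableAtFilter hs

theorem hasDerivAt_exp_integral_of_locallyIntegrable {f : ℝ → ℝ} (hf : LocallyIntegrable f) {s : ℝ}
    (hs : ContinuousAt f s) (a : ℝ) :
    HasDerivAt (fun b => Real.exp (∫ x in a..b, f x)) (Real.exp (∫ x in a..s, f x) * f s) s :=
  (hasDerivAt_integral_of_locallyIntegrable hf hs a).exp

/-- The value at time `t` of one unit paid at time `u`, when the interest rate is `r`. -/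
noncomputable def discountFactor (r : ℝ → ℝ) (t u : ℝ) : ℝ :=
  Real.exp (-(∫ x in t..u, r x))

/-- `W t` is the present value at time `t` of the future wages `w`, for every `t`. The integral
over `(t, ∞)` is encoded as an improper one, so that conditional convergence suffices. -/
def IsPresentValue (r : ℝ → ℝ) (w W : ℝ → E) : Prop :=
  ∀ t, Tendsto (fun T => ∫ u in t..T, discountFactor r t u • w u) atTop (𝓝 (W t))

variable {r : ℝ → ℝ} {w W : ℝ → E}

theorem exp_integral_mul_discountFactor (hr : LocallyIntegrable r) (a s u : ℝ) :
    Real.exp (∫ x in a..s, r x) * discountFactor r a u = discountFactor r s u := by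
  have hadd : (∫ x in a..s, r x) + ∫ x in s..u, r x = ∫ x in a..u, r x :=
    intervalIntegral.integral_add_adjacent_intervals
      (intervalIntegrable_of_locallyIntegrable hr a s)
      (intervalIntegrable_of_locallyIntegrable hr s u)
  rw [discountFactor, discountFactor, ← Real.exp_add, ← hadd, neg_add, add_neg_cancel_left]

theorem discountFactor_smul_eq (hr : LocallyIntegrable r) (w : ℝ → E) (a s : ℝ) :
    (fun u => discountFactor r s u • w u) =
      fun u => Real.exp (∫ x in a..s, r x) • discountFactor r a u • w u := by
  simp only [smul_smul, exp_integral_mul_discountFactor hr]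

theorem continuous_discountFactor (hr : LocallyIntegrable r) (a : ℝ) :
    Continuous (discountFactor r a) :=
  Real.continuous_exp.comp
    (intervalIntegral.continuous_primitive (intervalIntegrable_of_locallyIntegrable hr) a).neg

theorem locallyIntegrable_discountFactor_smul (hr : LocallyIntegrable r)
    (hw : LocallyIntegrable w) (a : ℝ) :
    LocallyIntegrable fun u => discountFactor r a u • w u :=
  hw.continuous_smul (continuous_discountFactor hr a)

theorem isPresentValue_integral_Ioi (hr : LocallyIntegrable r) (hw : LocallyIntegrable w) {a : ℝ}
    (hint : IntegrableOn (fun u => discountFactor r a u • w u) (Ioi a)) :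
    IsPresentValue r w fun t => ∫ u in Ioi t, discountFactor r t u • w u := by
  intro t
  have hint_t : IntegrableOn (fun u => discountFactor r t u • w u) (Ioi t) := by
    rw [discountFactor_smul_eq hr w a t]
    exact (integrableOn_Ioi_of_locallyIntegrable
      (locallyIntegrable_discountFactor_smul hr hw a) hint t).smul _
  exact intervalIntegral_tendsto_integral_Ioi t hint_t tendsto_id

namespace IsPresentValue

theorem eq_exp_integral_smul_sub (hW : IsPresentValue r w W) (hr : LocallyIntegrable r)
    (hw : LocallyIntegrable w) (a s : ℝ) :
    W s = Real.exp (∫ x in a..s, r x) • (W a - ∫ u in a..s, discountFactor r a u • w u) := by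
  have hii := intervalIntegrable_of_locallyIntegrable
    (locallyIntegrable_discountFactor_smul hr hw a)
  have hsplit (T : ℝ) : ∫ u in s..T, discountFactor r s u • w u =
      Real.exp (∫ x in a..s, r x) • ((∫ u in a..T, discountFactor r a u • w u) -
        ∫ u in a..s, discountFactor r a u • w u) := by
    rw [discountFactor_smul_eq hr w a s, intervalIntegral.integral_smul,
      intervalIntegral.integral_interval_sub_left (hii a T) (hii a s)]
  exact tendsto_nhds_unique (hW s)
    ((((hW a).sub_const _).const_smul _).congr fun T => (hsplit T).symm)

variable [CompleteSpace E]

theorem hasDerivAt (hW : IsPresentValue r w W) (hr : LocallyIntegrable r)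
    (hw : LocallyIntegrable w) {s : ℝ} (hrs : ContinuousAt r s) (hws : ContinuousAt w s) :
    HasDerivAt W (r s • W s - w s) s := by
  -- With `s` itself as the reference date, both exponentials equal `1` at `s`.
  have hdiscounted : HasDerivAt (fun b => ∫ u in s..b, discountFactor r s u • w u)
      (discountFactor r s s • w s) s :=
    hasDerivAt_integral_of_locallyIntegrable (locallyIntegrable_discountFactor_smul hr hw s)
      ((continuous_discountFactor hr s).continuousAt.smul hws) s
  have hprod := (hasDerivAt_exp_integral_of_locallyIntegrable hr hrs s).smul
    (hdiscounted.const_sub (W s))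
  refine (hprod.congr_of_eventuallyEq
    (.of_forall (hW.eq_exp_integral_smul_sub hr hw s))).congr_deriv ?_
  simp [discountFactor, sub_eq_neg_add]

end IsPresentValue

variable [CompleteSpace E]

theorem stmt4_general {lam : ℝ → ℝ} {K : ℝ → E} {t : ℝ} {k : E} (hr : LocallyIntegrable r)
    (hw : LocallyIntegrable w) (hlam : LocallyIntegrable lam) (hW : IsPresentValue r w W)
    (hK : ∀ s, K s = Real.exp (∫ x in t..s, (r x - lam x)) • (k + W t) - W s) :
    K t = k ∧ ∀ s, ContinuousAt r s → ContinuousAt w s → ContinuousAt lam s →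
      HasDerivAt K (w s + r s • K s - lam s • (K s + W s)) s := by
  refine ⟨by simp [hK], fun s hrs hws hlams => ?_⟩
  have hgrowth := (hasDerivAt_exp_integral_of_locallyIntegrable (hr.sub hlam) (hrs.sub hlams)
    t).smul_const (k + W t)
  refine ((hgrowth.sub (hW.hasDerivAt hr hw hrs hws)).congr_of_eventuallyEq
    (.of_forall hK)).congr_deriv ?_
  simp only [hK s, Pi.sub_apply]
  module

end

/-- In the consumption–saving problem with interest rate `r`, wage `w`
and propensity to consume `λ`, the function
`K(s) = exp(∫ₜ^s (r−λ)) · (k + W(t)) − W(s)`, where `W(t)` is the present value at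
time `t` of future wages, satisfies `K(t) = k` and solves
`dK/ds = w(s) + r(s)·K(s) − λ(s)·(K(s) + W(s))`; i.e. `K` is the flow of the
consumption-saving dynamics under the strategy `σ(s,k) = λ(s)·(k + W(s))`. -/
theorem stmt4
    (r w lam : ℝ → ℝ)
    (hr : Continuous r) (hw : Continuous w) (hlam : Continuous lam)
    (W : ℝ → ℝ)
    (hWdef : ∀ t : ℝ, W t = ∫ u in Set.Ioi t, Real.exp (-(∫ x in t..u, r x)) * w u)
    (hWint : ∀ t ≥ (0 : ℝ),
      IntegrableOn (fun u => Real.exp (-(∫ x in t..u, r x)) * w u) (Set.Ioi t))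
    (t k : ℝ) (ht : 0 ≤ t)
    (K : ℝ → ℝ)
    (hK : ∀ s : ℝ, K s = Real.exp (∫ x in t..s, (r x - lam x)) * (k + W t) - W s) :
    K t = k ∧
    ∀ s ≥ t, HasDerivAt K (w s + r s * K s - lam s * (K s + W s)) s := by
  have hr' := hr.locallyIntegrable (μ := volume)
  have hw' := hw.locallyIntegrable (μ := volume)
  have hW : IsPresentValue r w W :=
    funext hWdef ▸ isPresentValue_integral_Ioi hr' hw' (hWint t ht)
  obtain ⟨hKt, hderiv⟩ := stmt4_general hr' hw' hlam.locallyIntegrable hW hK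
  exact ⟨hKt, fun s _ => hderiv s hr.continuousAt hw.continuousAt hlam.continuousAt⟩
end

section
/- Let γ>0 with γ≠1, let h be a discount function, let r, w:[0,∞)→ℝ be continuous with W(t) := ∫ₜ^∞ exp(−∫ₜ^u r(x)dx)·w(u) du convergent for every t, and let λ:[0,∞)→(0,∞) be a continuous solution of equation (Recursion), all integrals being finite. Define σ(t,k) := λ(t)·(k+W(t)), V(t,k) := λ(t)^{−γ}·(k+W(t))^{1−γ}/(1−γ), and K(s,t,k) := exp(∫ₜ^s (r(x)−λ(x))dx)·(k+W(t)) − W(s). Then for every t≥0 and every k with k+W(t)>0: (i) ∂V/∂k(t,k) = σ(t,k)^{−γ}, i.e. ∂V/∂k(t,k) = u′(σ(t,k)) for the CRRA utility u(c)=c^{1−γ}/(1−γ); and (ii) V satisfies the integrated equilibrium equation V(t,k) = ∫ₜ^∞ h(s−t)·σ(s,K(s,t,k))^{1−γ}/(1−γ) ds. -/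
open MeasureTheory

/-! CRRA utility `u` is homogeneous of degree `1 - γ`, and along the flow total wealth `k + W` is
multiplied by `exp (∫ (r - λ))`. Hence the discounted utility of consumption at time `s` is the
integrand of (Recursion) times `u (k + W t)`, and (Recursion) says exactly that this integrand has
integral `λ t ^ (-γ)`. The envelope identity holds because the derivative of `u` is homogeneous of
degree `-γ`. -/

/-- The utility of consumption `c` with constant relative risk aversion `γ`. At `γ = 1`, where the
usual convention is the logarithm, division by zero makes it `0`. -/
noncomputable def crraUtility (γ c : ℝ) : ℝ := c ^ (1 - γ) / (1 - γ)

/-- The integrand of (Recursion) at time `s`, seen from time `t`: the discounted utility of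
consuming at time `s`, relative to the utility of total wealth at time `t`. -/
noncomputable def recursionKernel (γ : ℝ) (h r lam : ℝ → ℝ) (t s : ℝ) : ℝ :=
  lam s ^ (1 - γ) * Real.exp (-(1 - γ) * ∫ u in t..s, (lam u - r u)) * h (s - t)

section CRRAUtility

variable {γ : ℝ}

theorem hasDerivAt_crraUtility (hγ1 : γ ≠ 1) {c : ℝ} (hc : c ≠ 0) :
    HasDerivAt (crraUtility γ) (c ^ (-γ)) c := by
  have hpow := (Real.hasDerivAt_rpow_const (p := 1 - γ) (Or.inl hc)).div_const (1 - γ)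
  rwa [mul_div_cancel_left₀ _ (sub_ne_zero.mpr hγ1.symm), sub_sub_cancel_left] at hpow

theorem crraUtility_mul {a c : ℝ} (ha : 0 ≤ a) (hc : 0 ≤ c) :
    crraUtility γ (a * c) = a ^ (1 - γ) * crraUtility γ c := by
  rw [crraUtility, crraUtility, Real.mul_rpow ha hc, mul_div_assoc]

theorem hasDerivAt_rpow_neg_mul_crraUtility_add (hγ1 : γ ≠ 1) {a b k : ℝ} (ha : 0 ≤ a)
    (hk : 0 < k + b) :
    HasDerivAt (fun x => a ^ (-γ) * crraUtility γ (x + b)) ((a * (k + b)) ^ (-γ)) k := by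
  rw [Real.mul_rpow ha hk.le]
  exact ((hasDerivAt_crraUtility hγ1 hk.ne').comp_add_const k b).const_mul _

end CRRAUtility

section Recursion

variable {γ : ℝ} {h r lam : ℝ → ℝ} {t : ℝ}

theorem recursionKernel_nonneg {s : ℝ} (hlam : 0 ≤ lam s) (hh : 0 ≤ h (s - t)) :
    0 ≤ recursionKernel γ h r lam t s := by
  unfold recursionKernel
  positivity

theorem discount_mul_crraUtility_eq_recursionKernel_mul {s x : ℝ} (hlam : 0 ≤ lam s)
    (hx : 0 ≤ x) :
    h (s - t) * crraUtility γ (lam s * (Real.exp (∫ u in t..s, (r u - lam u)) * x)) =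
      recursionKernel γ h r lam t s * crraUtility γ x := by
  have growth_rpow : Real.exp (∫ u in t..s, (r u - lam u)) ^ (1 - γ) =
      Real.exp (-(1 - γ) * ∫ u in t..s, (lam u - r u)) := by
    simp_rw [← neg_sub (lam _), intervalIntegral.integral_neg, ← Real.exp_mul, neg_mul, mul_comm]
  rw [crraUtility_mul hlam (by positivity), crraUtility_mul (Real.exp_nonneg _) hx, growth_rpow,
    recursionKernel]
  ring

theorem integral_recursionKernel_eq_rpow_neg (hγ : γ ≠ 0) (hh : ∀ a > 0, 0 ≤ h a)
    (hlam : ∀ s ≥ t, 0 ≤ lam s)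
    (hrec : lam t = (∫ s in Set.Ioi t, recursionKernel γ h r lam t s) ^ (-(1 / γ))) :
    ∫ s in Set.Ioi t, recursionKernel γ h r lam t s = lam t ^ (-γ) := by
  have integral_nonneg : 0 ≤ ∫ s in Set.Ioi t, recursionKernel γ h r lam t s :=
    setIntegral_nonneg measurableSet_Ioi fun s hs =>
      recursionKernel_nonneg (hlam s (le_of_lt hs)) (hh _ (sub_pos.mpr hs))
  rw [one_div, ← inv_neg] at hrec
  exact ((Real.eq_rpow_inv (hlam t le_rfl) integral_nonneg (neg_ne_zero.mpr hγ)).mp hrec).symm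

-- A divergent Bochner integral is `0`, but here the integral is `lam t ^ (-γ) > 0`.
theorem integrableOn_recursionKernel (hlam : 0 < lam t)
    (hint : ∫ s in Set.Ioi t, recursionKernel γ h r lam t s = lam t ^ (-γ)) :
    IntegrableOn (recursionKernel γ h r lam t) (Set.Ioi t) :=
  Integrable.of_integral_ne_zero (hint ▸ (Real.rpow_pos_of_pos hlam _).ne')

end Recursion

theorem stmt5_general
    {γ : ℝ} (hγ : γ ≠ 0) (hγ1 : γ ≠ 1)
    {h : ℝ → ℝ} (hh : ∀ a > 0, 0 ≤ h a)
    {r w lam : ℝ → ℝ} (hr : LocallyIntegrable r) (hlam : LocallyIntegrable lam)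
    (hlampos : ∀ t ≥ 0, 0 < lam t)
    {W : ℝ → ℝ}
    (hWdef : ∀ t, W t = ∫ u in Set.Ioi t, Real.exp (-(∫ x in t..u, r x)) * w u)
    (hWint : ∀ t ≥ 0,
      IntegrableOn (fun u => Real.exp (-(∫ x in t..u, r x)) * w u) (Set.Ioi t))
    (hrec : ∀ t ≥ 0,
      lam t = (∫ s in Set.Ioi t, recursionKernel γ h r lam t s) ^ (-(1 / γ)))
    {σ : ℝ → ℝ → ℝ} (hσ : ∀ t k, σ t k = lam t * (k + W t))
    {V : ℝ → ℝ → ℝ} (hV : ∀ t k, V t k = lam t ^ (-γ) * (k + W t) ^ (1 - γ) / (1 - γ))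
    {K : ℝ → ℝ → ℝ → ℝ}
    (hK : ∀ s t k, K s t k = Real.exp (∫ x in t..s, (r x - lam x)) * (k + W t) - W s)
    {t : ℝ} (ht : 0 ≤ t) {k : ℝ} (hk : 0 < k + W t) :
    HasDerivAt (V t) (σ t k ^ (-γ)) k ∧
    HasDerivAt (crraUtility γ) (σ t k ^ (-γ)) (σ t k) ∧
    IntegrableOn (fun s => h (s - t) * σ s (K s t k) ^ (1 - γ) / (1 - γ)) (Set.Ioi t) ∧
    V t k = ∫ s in Set.Ioi t, h (s - t) * σ s (K s t k) ^ (1 - γ) / (1 - γ) := by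
  have value_eq (x : ℝ) : V t x = lam t ^ (-γ) * crraUtility γ (x + W t) := by
    rw [hV, crraUtility, mul_div_assoc]
  have integrand_eq : ∀ s ∈ Set.Ioi t, h (s - t) * σ s (K s t k) ^ (1 - γ) / (1 - γ) =
      recursionKernel γ h r lam t s * crraUtility γ (k + W t) := by
    intro s hs
    have lam_nonneg : 0 ≤ lam s := (hlampos s (ht.trans (le_of_lt hs))).le
    rw [← discount_mul_crraUtility_eq_recursionKernel_mul lam_nonneg hk.le, hσ, hK,
      sub_add_cancel, crraUtility, mul_div_assoc]
  have integral_eq := integral_recursionKernel_eq_rpow_neg hγ hh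
    (fun s hs => (hlampos s (ht.trans hs)).le) (hrec t ht)
  refine ⟨?_, ?_, ?_, ?_⟩
  · rw [funext value_eq, hσ]
    exact hasDerivAt_rpow_neg_mul_crraUtility_add hγ1 (hlampos t ht).le hk
  · exact hasDerivAt_crraUtility hγ1 (hσ t k ▸ (mul_pos (hlampos t ht) hk).ne')
  · rw [integrableOn_congr_fun integrand_eq measurableSet_Ioi]
    exact (integrableOn_recursionKernel (hlampos t ht) integral_eq).mul_const _
  · rw [setIntegral_congr_fun measurableSet_Ioi integrand_eq, integral_mul_const, integral_eq,
      value_eq]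

/-- For CRRA utility `u(c) = c^{1−γ}/(1−γ)` (`γ > 0`, `γ ≠ 1`), if
`λ` is a positive continuous solution of equation (Recursion), then the value function
`V(t,k) = λ(t)^{−γ}·(k+W(t))^{1−γ}/(1−γ)` of the strategy `σ(t,k) = λ(t)·(k+W(t))`
satisfies the envelope identity `∂V/∂k = σ^{−γ} = u′(σ)` and the integrated
equilibrium equation. -/
theorem stmt5
    (γ : ℝ) (hγ : 0 < γ) (hγ1 : γ ≠ 1)
    -- the discount function
    (h : ℝ → ℝ) (hh : ContDiff ℝ 1 h) (hh0 : h 0 = 1)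
    (hhpos : ∀ t ≥ (0 : ℝ), 0 ≤ h t) (hh' : ∀ t ≥ (0 : ℝ), deriv h t ≤ 0)
    (hhlim : Filter.Tendsto h Filter.atTop (nhds 0))
    -- interest rate, wage, propensity to consume
    (r w lam : ℝ → ℝ) (hr : Continuous r) (hw : Continuous w)
    (hlam : Continuous lam) (hlampos : ∀ t ≥ (0 : ℝ), 0 < lam t)
    -- present value of future wages
    (W : ℝ → ℝ)
    (hWdef : ∀ t : ℝ, W t = ∫ u in Set.Ioi t, Real.exp (-(∫ x in t..u, r x)) * w u)
    (hWint : ∀ t ≥ (0 : ℝ),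
      IntegrableOn (fun u => Real.exp (-(∫ x in t..u, r x)) * w u) (Set.Ioi t))
    -- `λ` solves equation (Recursion), all integrals being finite
    (hrecint : ∀ t ≥ (0 : ℝ),
      IntegrableOn
        (fun s => lam s ^ (1 - γ) *
          Real.exp (-(1 - γ) * ∫ u in t..s, (lam u - r u)) * h (s - t)) (Set.Ioi t))
    (hrec : ∀ t ≥ (0 : ℝ),
      lam t = (∫ s in Set.Ioi t, lam s ^ (1 - γ) *
        Real.exp (-(1 - γ) * ∫ u in t..s, (lam u - r u)) * h (s - t)) ^ (-(1 / γ)))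
    -- the strategy, its value function and its flow
    (σ : ℝ → ℝ → ℝ) (hσ : ∀ t k : ℝ, σ t k = lam t * (k + W t))
    (V : ℝ → ℝ → ℝ) (hV : ∀ t k : ℝ, V t k = lam t ^ (-γ) * (k + W t) ^ (1 - γ) / (1 - γ))
    (K : ℝ → ℝ → ℝ → ℝ)
    (hK : ∀ s t k : ℝ,
      K s t k = Real.exp (∫ x in t..s, (r x - lam x)) * (k + W t) - W s)
    -- the integral in the integrated equilibrium equation is finite
    (hIEint : ∀ t ≥ (0 : ℝ), ∀ k : ℝ,
      IntegrableOn (fun s => h (s - t) * σ s (K s t k) ^ (1 - γ) / (1 - γ)) (Set.Ioi t)) :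
    ∀ t ≥ (0 : ℝ), ∀ k : ℝ, 0 < k + W t →
      -- (i) envelope identity, `∂V/∂k(t,k) = σ(t,k)^{−γ} = u′(σ(t,k))`
      deriv (fun x => V t x) k = σ t k ^ (-γ) ∧
      deriv (fun x => V t x) k = deriv (fun c => c ^ (1 - γ) / (1 - γ)) (σ t k) ∧
      -- (ii) integrated equilibrium equation
      V t k = ∫ s in Set.Ioi t, h (s - t) * σ s (K s t k) ^ (1 - γ) / (1 - γ) := by
  intro t ht k hk
  obtain ⟨hVk, hu, -, hIE⟩ := stmt5_general hγ.ne' hγ1 (fun a ha => hhpos a (le_of_lt ha))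
    hr.locallyIntegrable hlam.locallyIntegrable hlampos hWdef hWint hrec hσ hV hK ht hk
  exact ⟨hVk.deriv, hVk.deriv.trans hu.deriv.symm, hIE⟩
end

section
/- Let γ>0, ρ>0, and let r:[0,∞)→ℝ be continuous. Define E(t) := exp[(1/γ)·∫₀^t ((1−γ)r(s)−ρ) ds], and assume ∫₀^∞ E(s) ds < ∞. Then the function λ̄(t) := E(t)/∫ₜ^∞ E(s) ds is positive and solves equation (Recursion) with the exponential discount function h(s)=e^{−ρs}; in particular, all the integrals appearing in (Recursion) for λ̄ are finite. -/
open MeasureTheory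

/-! Write `I(t) = ∫ₜ^∞ E`, so that `λ̄ = E / I` is minus the derivative of `log I` and
`exp(-∫ₜˢ λ̄) = I(s) / I(t)`: the factor `I(s)` cancels from `λ̄(s)^(1-γ) · exp(-(1-γ)∫ₜˢ λ̄)`,
leaving `(E(s) / I(t))^(1-γ)`. By the choice of `E`, the remaining factor of the integrand is
`(E(s) / E(t))^γ`. The product of the two is `λ̄(t)^(-γ) · E(s) / I(t)`, whose integral over `s > t`
is `λ̄(t)^(-γ)`. -/

open Set Filter

theorem hasDerivAt_integral_Ioi {F : Type*} [NormedAddCommGroup F] [NormedSpace ℝ F]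
    [CompleteSpace F] {f : ℝ → F} {a t : ℝ} (hint : IntegrableOn f (Ioi a)) (hat : a < t)
    (hf : ContinuousAt f t) : HasDerivAt (fun x => ∫ s in Ioi x, f s) (-f t) t := by
  have hint_tail {x : ℝ} (hx : a < x) : IntegrableOn f (Ioi x) :=
    hint.mono_set (Ioi_subset_Ioi hx.le)
  have hprimitive : HasDerivAt (fun x => ∫ s in a..x, f s) (f t) t :=
    intervalIntegral.integral_hasDerivAt_right
      ((intervalIntegrable_iff_integrableOn_Ioc_of_le hat.le).2
        (hint.mono_set Ioc_subset_Ioi_self))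
      ⟨Ioi a, Ioi_mem_nhds hat, hint.aestronglyMeasurable⟩ hf
  refine (hprimitive.const_sub (∫ s in Ioi a, f s)).congr_of_eventuallyEq ?_
  filter_upwards [Ioi_mem_nhds hat] with x hx
  rw [← intervalIntegral.integral_Ioi_sub_Ioi' hint (hint_tail hx), sub_sub_cancel]

theorem integrableOn_Ioi_of_locallyIntegrable_s6 {F : Type*} [NormedAddCommGroup F] {f : ℝ → F}
    (hf : LocallyIntegrable f) (hint : IntegrableAtFilter f atTop) (t : ℝ) :
    IntegrableOn f (Ioi t) :=
  (integrableOn_Ici_iff_integrableAtFilter_atTop.2 ⟨hint, hf.locallyIntegrableOn _⟩).mono_set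
    Ioi_subset_Ici_self

theorem integral_Ioi_pos {f : ℝ → ℝ} {t : ℝ} (hpos : ∀ x > t, 0 < f x)
    (hint : IntegrableOn f (Ioi t)) : 0 < ∫ s in Ioi t, f s := by
  have hsupport : Ioi t ⊆ Function.support f := fun x hx => (hpos x hx).ne'
  rw [setIntegral_pos_iff_support_of_nonneg_ae
    (ae_restrict_of_forall_mem measurableSet_Ioi fun x hx => (hpos x hx).le) hint,
    inter_eq_right.2 hsupport, Real.volume_Ioi]
  exact ENNReal.coe_lt_top

theorem div_rpow_one_sub_mul_div_rpow {x y z : ℝ} (hx : 0 < x) (hy : 0 < y) (hz : 0 < z) (γ : ℝ) :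
    (x / z) ^ (1 - γ) * (x / y) ^ γ = (y / z) ^ (-γ) * (x / z) := by
  have hsplit : (x / z) ^ (1 - γ) = (x / z) * (x / z) ^ (-γ) := by
    rw [sub_eq_add_neg, Real.rpow_add (div_pos hx hz), Real.rpow_one]
  have hratio : (x / z) ^ (-γ) * (x / y) ^ γ = (y / z) ^ (-γ) := by
    have hinv : (x / y) ^ γ = (y / x) ^ (-γ) := by rw [Real.rpow_neg_eq_inv_rpow, inv_div]
    rw [hinv, mul_comm, ← Real.mul_rpow (div_pos hy hx).le (div_pos hx hz).le,
      div_mul_div_cancel₀ hx.ne']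
  rw [hsplit, mul_assoc, hratio, mul_comm]

/-- The hazard rate `t ↦ f(t) / ∫ₜ^∞ f` of a density `f`, which need not have total mass one. The
function `λ̄` of the theorem is the hazard rate of `E`. -/
noncomputable def hazardRate (f : ℝ → ℝ) (t : ℝ) : ℝ := f t / ∫ s in Ioi t, f s

/-- The integrand `s ↦ λ(s)^(1-γ) · exp(-(1-γ)∫ₜˢ (λ - r)) · h(s-t)` of (Recursion) at time `t`, for
a discount function `h`. -/
noncomputable def recursionIntegrand (γ : ℝ) (h r lam : ℝ → ℝ) (t s : ℝ) : ℝ :=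
  lam s ^ (1 - γ) * Real.exp (-(1 - γ) * ∫ u in t..s, (lam u - r u)) * h (s - t)

section HazardRate

variable {f : ℝ → ℝ}

theorem hazardRate_pos {t : ℝ} (hpos : ∀ x ≥ t, 0 < f x) (hint : IntegrableOn f (Ioi t)) :
    0 < hazardRate f t :=
  div_pos (hpos t le_rfl) (integral_Ioi_pos (fun x hx => hpos x hx.le) hint)

theorem continuous_hazardRate (hf : Continuous f) (hpos : ∀ x, 0 < f x)
    (hint : ∀ t, IntegrableOn f (Ioi t)) : Continuous (hazardRate f) := by
  have htail : Continuous fun t => ∫ s in Ioi t, f s := continuous_iff_continuousAt.2 fun t =>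
    (hasDerivAt_integral_Ioi (hint (t - 1)) (sub_one_lt t) hf.continuousAt).continuousAt
  exact hf.div htail fun t => (integral_Ioi_pos (fun x _ => hpos x) (hint t)).ne'

theorem integral_hazardRate (hf : Continuous f) (hpos : ∀ x, 0 < f x)
    (hint : ∀ t, IntegrableOn f (Ioi t)) (a b : ℝ) :
    ∫ u in a..b, hazardRate f u =
      Real.log (∫ s in Ioi a, f s) - Real.log (∫ s in Ioi b, f s) := by
  have hderiv (t : ℝ) :
      HasDerivAt (fun x => -Real.log (∫ s in Ioi x, f s)) (hazardRate f t) t := by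
    have hlog := (hasDerivAt_integral_Ioi (hint (t - 1)) (sub_one_lt t) hf.continuousAt).log
      (integral_Ioi_pos (fun x _ => hpos x) (hint t)).ne'
    simpa only [hazardRate, neg_div, neg_neg] using hlog.fun_neg
  rw [intervalIntegral.integral_eq_sub_of_hasDerivAt (fun t _ => hderiv t)
    ((continuous_hazardRate hf hpos hint).intervalIntegrable a b), neg_sub_neg]

theorem exp_neg_integral_hazardRate (hf : Continuous f) (hpos : ∀ x, 0 < f x)
    (hint : ∀ t, IntegrableOn f (Ioi t)) (a b : ℝ) :
    Real.exp (-∫ u in a..b, hazardRate f u) = (∫ s in Ioi b, f s) / ∫ s in Ioi a, f s := by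
  have htail_pos (t : ℝ) : 0 < ∫ s in Ioi t, f s := integral_Ioi_pos (fun x _ => hpos x) (hint t)
  rw [integral_hazardRate hf hpos hint, neg_sub, Real.exp_sub, Real.exp_log (htail_pos b),
    Real.exp_log (htail_pos a)]

theorem recursionIntegrand_hazardRate (hf : Continuous f) (hpos : ∀ x, 0 < f x)
    (hint : ∀ t, IntegrableOn f (Ioi t)) (γ : ℝ) (h : ℝ → ℝ) {r : ℝ → ℝ} {t s : ℝ}
    (hr : IntervalIntegrable r volume t s) :
    recursionIntegrand γ h r (hazardRate f) t s =
      (f s / ∫ u in Ioi t, f u) ^ (1 - γ) *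
        (Real.exp ((1 - γ) * ∫ u in t..s, r u) * h (s - t)) := by
  have htail_pos (t : ℝ) : 0 < ∫ s in Ioi t, f s := integral_Ioi_pos (fun x _ => hpos x) (hint t)
  have hexp : Real.exp (-(1 - γ) * ∫ u in t..s, (hazardRate f u - r u)) =
      ((∫ u in Ioi s, f u) / ∫ u in Ioi t, f u) ^ (1 - γ) *
        Real.exp ((1 - γ) * ∫ u in t..s, r u) := by
    rw [intervalIntegral.integral_sub
      ((continuous_hazardRate hf hpos hint).intervalIntegrable t s) hr,
      ← exp_neg_integral_hazardRate hf hpos hint, ← Real.exp_mul, ← Real.exp_add]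
    ring_nf
  have hcancel : hazardRate f s * ((∫ u in Ioi s, f u) / ∫ u in Ioi t, f u) =
      f s / ∫ u in Ioi t, f u :=
    div_mul_div_cancel₀ (htail_pos s).ne'
  rw [recursionIntegrand, hexp, ← mul_assoc, mul_assoc,
    ← Real.mul_rpow (hazardRate_pos (fun x _ => hpos x) (hint s)).le
      (div_pos (htail_pos s) (htail_pos t)).le, hcancel]

end HazardRate

/-- The function `E` of the theorem: the consumption path that starts at `1`, grows at the
Euler-equation rate `(r - ρ) / γ`, and is deflated to time-`0` prices by `exp(-∫₀ᵗ r)`. -/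
noncomputable def deflatedConsumption (γ ρ : ℝ) (r : ℝ → ℝ) (t : ℝ) : ℝ :=
  Real.exp ((1 / γ) * ∫ s in (0 : ℝ)..t, ((1 - γ) * r s - ρ))

section DeflatedConsumption

variable {γ ρ : ℝ} {r : ℝ → ℝ}

theorem deflatedConsumption_pos (t : ℝ) : 0 < deflatedConsumption γ ρ r t := Real.exp_pos _

theorem continuous_deflatedConsumption (hr : ∀ a b, IntervalIntegrable r volume a b) :
    Continuous (deflatedConsumption γ ρ r) := by
  have hprimitive : Continuous fun t => ∫ s in (0 : ℝ)..t, ((1 - γ) * r s - ρ) :=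
    intervalIntegral.continuous_primitive (fun a b =>
      ((hr a b).const_mul (1 - γ)).sub intervalIntegrable_const) 0
  exact Real.continuous_exp.comp (hprimitive.const_mul (1 / γ))

theorem deflatedConsumption_div_rpow (hγ : γ ≠ 0)
    (hr : ∀ a b, IntervalIntegrable r volume a b) (t s : ℝ) :
    (deflatedConsumption γ ρ r s / deflatedConsumption γ ρ r t) ^ γ =
      Real.exp ((1 - γ) * ∫ u in t..s, r u) * Real.exp (-ρ * (s - t)) := by
  have hr_int (a b : ℝ) : IntervalIntegrable (fun u => (1 - γ) * r u) volume a b :=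
    (hr a b).const_mul (1 - γ)
  have hrate_int (a b : ℝ) : IntervalIntegrable (fun u => (1 - γ) * r u - ρ) volume a b :=
    (hr_int a b).sub intervalIntegrable_const
  have hsplit : ∫ u in t..s, ((1 - γ) * r u - ρ) = (1 - γ) * (∫ u in t..s, r u) - ρ * (s - t) := by
    rw [intervalIntegral.integral_sub (hr_int t s) intervalIntegrable_const,
      intervalIntegral.integral_const_mul, intervalIntegral.integral_const, smul_eq_mul,
      mul_comm (s - t)]
  rw [deflatedConsumption, deflatedConsumption, ← Real.exp_sub, ← mul_sub,
    intervalIntegral.integral_interval_sub_left (hrate_int 0 s) (hrate_int 0 t), ← Real.exp_mul,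
    hsplit, ← Real.exp_add]
  congr 1
  field_simp
  ring

end DeflatedConsumption

theorem recursionIntegrand_hazardRate_deflatedConsumption {γ ρ : ℝ} {r : ℝ → ℝ} (hγ : γ ≠ 0)
    (hr : ∀ a b, IntervalIntegrable r volume a b)
    (hint : ∀ t, IntegrableOn (deflatedConsumption γ ρ r) (Ioi t)) (t s : ℝ) :
    recursionIntegrand γ (fun x => Real.exp (-ρ * x)) r (hazardRate (deflatedConsumption γ ρ r))
        t s =
      hazardRate (deflatedConsumption γ ρ r) t ^ (-γ) *
        (deflatedConsumption γ ρ r s / ∫ u in Ioi t, deflatedConsumption γ ρ r u) := by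
  rw [recursionIntegrand_hazardRate (continuous_deflatedConsumption hr) deflatedConsumption_pos
      hint γ _ (hr t s),
    ← deflatedConsumption_div_rpow hγ hr,
    div_rpow_one_sub_mul_div_rpow (deflatedConsumption_pos s) (deflatedConsumption_pos t)
      (integral_Ioi_pos (fun x _ => deflatedConsumption_pos x) (hint t)), hazardRate]

theorem stmt6_general {γ ρ : ℝ} (hγ : γ ≠ 0) {r : ℝ → ℝ}
    (hr : ∀ a b, IntervalIntegrable r volume a b) {E : ℝ → ℝ}
    (hE : ∀ t, E t = Real.exp ((1 / γ) * ∫ s in (0 : ℝ)..t, ((1 - γ) * r s - ρ)))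
    (hEint : IntegrableOn E (Ioi 0)) {lamBar : ℝ → ℝ}
    (hlamBar : ∀ t, lamBar t = E t / ∫ s in Ioi t, E s) (t : ℝ) :
    0 < lamBar t ∧
      IntegrableOn (recursionIntegrand γ (fun x => Real.exp (-ρ * x)) r lamBar t) (Ioi t) ∧
      lamBar t = (∫ s in Ioi t, recursionIntegrand γ (fun x => Real.exp (-ρ * x)) r lamBar t s) ^
        (-(1 / γ)) := by
  obtain rfl : E = deflatedConsumption γ ρ r := funext hE
  obtain rfl : lamBar = hazardRate (deflatedConsumption γ ρ r) := funext hlamBar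
  have hint : ∀ t, IntegrableOn (deflatedConsumption γ ρ r) (Ioi t) :=
    integrableOn_Ioi_of_locallyIntegrable_s6 (continuous_deflatedConsumption hr).locallyIntegrable
      ⟨Ioi 0, Ioi_mem_atTop 0, hEint⟩
  have hlam_pos : 0 < hazardRate (deflatedConsumption γ ρ r) t :=
    hazardRate_pos (fun x _ => deflatedConsumption_pos x) (hint t)
  have htail_pos : 0 < ∫ s in Ioi t, deflatedConsumption γ ρ r s :=
    integral_Ioi_pos (fun x _ => deflatedConsumption_pos x) (hint t)
  rw [funext (recursionIntegrand_hazardRate_deflatedConsumption hγ hr hint t)]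
  refine ⟨hlam_pos, ((hint t).div_const _).const_mul _, ?_⟩
  rw [integral_const_mul, integral_div, div_self htail_pos.ne', mul_one,
    ← Real.rpow_mul hlam_pos.le, neg_mul_neg, mul_one_div_cancel hγ, Real.rpow_one]

/-- With exponential discounting `h(s) = e^{−ρs}`, the function
`λ̄(t) = E(t) / ∫ₜ^∞ E(s) ds`, where `E(t) = exp[(1/γ)·∫₀^t ((1−γ)r(s)−ρ) ds]`,
is positive and solves equation (Recursion); in particular all the integrals
appearing in (Recursion) for `λ̄` are finite. -/
theorem stmt6
    (γ ρ : ℝ) (hγ : 0 < γ) (hρ : 0 < ρ)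
    (r : ℝ → ℝ) (hr : Continuous r)
    (E : ℝ → ℝ)
    (hE : ∀ t : ℝ, E t = Real.exp ((1 / γ) * ∫ s in (0:ℝ)..t, ((1 - γ) * r s - ρ)))
    (hEint : IntegrableOn E (Set.Ioi 0))
    (lamBar : ℝ → ℝ)
    (hlamBar : ∀ t : ℝ, lamBar t = E t / ∫ s in Set.Ioi t, E s) :
    (∀ t ≥ (0 : ℝ), 0 < lamBar t) ∧
    (∀ t ≥ (0 : ℝ),
      IntegrableOn
        (fun s => lamBar s ^ (1 - γ) *
          Real.exp (-(1 - γ) * ∫ u in t..s, (lamBar u - r u)) *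
          Real.exp (-ρ * (s - t))) (Set.Ioi t)) ∧
    (∀ t ≥ (0 : ℝ),
      lamBar t = (∫ s in Set.Ioi t, lamBar s ^ (1 - γ) *
        Real.exp (-(1 - γ) * ∫ u in t..s, (lamBar u - r u)) *
        Real.exp (-ρ * (s - t))) ^ (-(1 / γ))) := by
  have h := stmt6_general hγ.ne' hr.intervalIntegrable hE hEint hlamBar
  exact ⟨fun t _ => (h t).1, fun t _ => (h t).2.1, fun t _ => (h t).2.2⟩
end

section
/- Let the interest rate r>0 and wage w≥0 be constant, let h be a discount function with h(t)>0 for all t and H := ∫₀^∞ h(s) ds < ∞, and let k₀ be such that k₀ + w/r > 0. Set c₀ := (k₀+w/r)/H, and define k(t) := (k₀ + w/r − c₀·∫₀^t h(s)ds)·e^{rt} − w/r and c(t) := c₀·h(t)·e^{rt}. Then: (i) k solves dk/dt = r·k(t) + w − c(t) with k(0)=k₀; and (ii) the optimal propensity to consume out of wealth, λ(t) := c(t)/(k(t)+w/r), equals h(t)·(∫ₜ^∞ h(s)ds)^{−1} for all t≥0; in particular λ(0) = 1/H, the constant equilibrium propensity. -/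
open MeasureTheory

/- The wealth `k + w / r` (capital plus capitalised wages) grows at rate `r` net of consumption, so
discounted back to time `0` it falls by `c₀ * h` per unit of time. Starting from `c₀ * ∫₀^∞ h`, what
is left at time `t` is `c₀ * ∫ₜ^∞ h`, and the common factor `c₀ * exp (r * t)` cancels from the
propensity to consume. -/

open Set

theorem setIntegral_pos_of_forall_pos {α : Type*} [MeasurableSpace α] {μ : Measure α} {s : Set α}
    {f : α → ℝ} (hs : MeasurableSet s) (hμs : μ s ≠ 0) (hf : IntegrableOn f s μ)
    (hpos : ∀ x ∈ s, 0 < f x) : 0 < ∫ x in s, f x ∂μ := by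
  have hsupp : Function.support f ∩ s = s := inter_eq_right.mpr fun x hx => (hpos x hx).ne'
  have hnonneg : 0 ≤ᵐ[μ.restrict s] f := ae_restrict_of_forall_mem hs fun x hx => (hpos x hx).le
  rw [setIntegral_pos_iff_support_of_nonneg_ae hnonneg hf, hsupp]
  exact pos_iff_ne_zero.mpr hμs

/-- The consumption path that the Euler–Lagrange equation selects for logarithmic utility, discount
function `h` and interest rate `r`, with initial level `c₀`. -/
noncomputable def consumptionPath (r c₀ : ℝ) (h : ℝ → ℝ) (t : ℝ) : ℝ :=
  c₀ * h t * Real.exp (r * t)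

/-- The total wealth, capital plus capitalised wages `w / r`, left at time `t` by
`consumptionPath r c₀ h` out of the initial wealth `W`. Wages enter only through `W`, which is why
`w` is not a parameter. -/
noncomputable def wealthPath (r W c₀ : ℝ) (h : ℝ → ℝ) (t : ℝ) : ℝ :=
  (W - c₀ * ∫ s in (0 : ℝ)..t, h s) * Real.exp (r * t)

section

variable {r w W c₀ t : ℝ} {h : ℝ → ℝ}

@[simp]
theorem wealthPath_zero : wealthPath r W c₀ h 0 = W := by
  simp [wealthPath]

theorem hasDerivAt_wealthPath (hh : Continuous h) :
    HasDerivAt (wealthPath r W c₀ h)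
      (r * wealthPath r W c₀ h t - consumptionPath r c₀ h t) t := by
  have hspent : HasDerivAt (fun u => W - c₀ * ∫ s in (0 : ℝ)..u, h s) (-(c₀ * h t)) t :=
    ((hh.integral_hasStrictDerivAt 0 t).hasDerivAt.const_mul c₀).const_sub W
  have hgrowth : HasDerivAt (fun u => Real.exp (r * u)) (Real.exp (r * t) * r) t :=
    (hasDerivAt_const_mul r).exp
  refine (hspent.mul hgrowth).congr_deriv ?_
  simp only [wealthPath, consumptionPath]
  ring

theorem hasDerivAt_wealthPath_sub_div (hr : r ≠ 0) (hh : Continuous h) :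
    HasDerivAt (fun u => wealthPath r W c₀ h u - w / r)
      (r * (wealthPath r W c₀ h t - w / r) + w - consumptionPath r c₀ h t) t := by
  refine ((hasDerivAt_wealthPath hh).sub_const (w / r)).congr_deriv ?_
  rw [mul_sub, mul_div_cancel₀ w hr, sub_add_cancel]

theorem wealthPath_eq_mul_integral_Ioi (h₀ : IntegrableOn h (Ioi 0)) (ht : IntegrableOn h (Ioi t))
    (hW : c₀ * ∫ s in Ioi 0, h s = W) :
    wealthPath r W c₀ h t = c₀ * Real.exp (r * t) * ∫ s in Ioi t, h s := by
  rw [wealthPath, ← hW, ← intervalIntegral.integral_interval_add_Ioi h₀ ht]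
  ring

theorem consumptionPath_div_wealthPath (hc₀ : c₀ ≠ 0) (h₀ : IntegrableOn h (Ioi 0))
    (ht : IntegrableOn h (Ioi t)) (hW : c₀ * ∫ s in Ioi 0, h s = W) :
    consumptionPath r c₀ h t / wealthPath r W c₀ h t = h t * (∫ s in Ioi t, h s)⁻¹ := by
  have hscale : c₀ * Real.exp (r * t) ≠ 0 := mul_ne_zero hc₀ (Real.exp_ne_zero _)
  rw [wealthPath_eq_mul_integral_Ioi h₀ ht hW, consumptionPath, mul_right_comm,
    mul_div_mul_left _ _ hscale, div_eq_mul_inv]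

end

theorem stmt8_general {r w k₀ : ℝ} (hr : r ≠ 0) {h : ℝ → ℝ} (hh : Continuous h)
    (hH : ∫ s in Ioi 0, h s ≠ 0) (hk₀ : k₀ + w / r ≠ 0)
    {c₀ : ℝ} (hc₀ : c₀ = (k₀ + w / r) / ∫ s in Ioi 0, h s) {k c : ℝ → ℝ}
    (hk : ∀ t, k t = (k₀ + w / r - c₀ * ∫ s in (0 : ℝ)..t, h s) * Real.exp (r * t) - w / r)
    (hc : ∀ t, c t = c₀ * h t * Real.exp (r * t)) :
    k 0 = k₀ ∧
    (∀ t, HasDerivAt k (r * k t + w - c t) t) ∧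
    (∀ t, ∫ s in Ioi t, h s ≠ 0 →
      k t + w / r ≠ 0 ∧ c t / (k t + w / r) = h t * (∫ s in Ioi t, h s)⁻¹) := by
  obtain rfl : k = fun t => wealthPath r (k₀ + w / r) c₀ h t - w / r := funext hk
  obtain rfl : c = consumptionPath r c₀ h := funext hc
  have hc₀_ne : c₀ ≠ 0 := hc₀ ▸ div_ne_zero hk₀ hH
  have hW : c₀ * ∫ s in Ioi 0, h s = k₀ + w / r := by rw [hc₀, div_mul_cancel₀ _ hH]
  have hint : ∀ {t}, ∫ s in Ioi t, h s ≠ 0 → IntegrableOn h (Ioi t) :=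
    Integrable.of_integral_ne_zero
  refine ⟨by simp, fun t => hasDerivAt_wealthPath_sub_div hr hh, fun t ht => ?_⟩
  simp only [sub_add_cancel]
  refine ⟨?_, consumptionPath_div_wealthPath hc₀_ne (hint hH) (hint ht) hW⟩
  rw [wealthPath_eq_mul_integral_Ioi (hint hH) (hint ht) hW]
  exact mul_ne_zero (mul_ne_zero hc₀_ne (Real.exp_ne_zero _)) ht

/-- In the consumption–saving problem with logarithmic utility,
constant interest rate `r > 0` and constant wage `w ≥ 0`, the time-0 optimal
(pre-commitment) path `k(t) = (k₀ + w/r − c₀·∫₀^t h)·e^{rt} − w/r`,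
`c(t) = c₀·h(t)·e^{rt}` with `c₀ = (k₀ + w/r)/H` satisfies the wealth dynamics, and
its propensity to consume out of wealth is `λ(t) = h(t)·(∫ₜ^∞ h)⁻¹`; in particular
`λ(0) = 1/H`, the constant equilibrium propensity. -/
theorem stmt8
    (r w k₀ : ℝ) (hr : 0 < r) (hw : 0 ≤ w)
    -- the discount function
    (h : ℝ → ℝ) (hh : ContDiff ℝ 1 h) (hh0 : h 0 = 1)
    (hhpos : ∀ t ≥ (0 : ℝ), 0 < h t) (hh' : ∀ t ≥ (0 : ℝ), deriv h t ≤ 0)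
    (hhlim : Filter.Tendsto h Filter.atTop (nhds 0))
    (hH : IntegrableOn h (Set.Ioi 0))
    (hk₀ : 0 < k₀ + w / r)
    (c₀ : ℝ) (hc₀ : c₀ = (k₀ + w / r) / ∫ s in Set.Ioi (0:ℝ), h s)
    (k c : ℝ → ℝ)
    (hk : ∀ t : ℝ,
      k t = (k₀ + w / r - c₀ * ∫ s in (0:ℝ)..t, h s) * Real.exp (r * t) - w / r)
    (hc : ∀ t : ℝ, c t = c₀ * h t * Real.exp (r * t)) :
    -- (i) the wealth dynamics hold
    k 0 = k₀ ∧
    (∀ t ≥ (0 : ℝ), HasDerivAt k (r * k t + w - c t) t) ∧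
    -- (ii) the optimal propensity to consume out of wealth
    (∀ t ≥ (0 : ℝ), c t / (k t + w / r) = h t * (∫ s in Set.Ioi t, h s)⁻¹) ∧
    c 0 / (k 0 + w / r) = (∫ s in Set.Ioi (0:ℝ), h s)⁻¹ := by
  have htail : ∀ t ≥ (0 : ℝ), ∫ s in Ioi t, h s ≠ 0 := fun t ht =>
    (setIntegral_pos_of_forall_pos measurableSet_Ioi (by simp) (hH.mono_set (Ioi_subset_Ioi ht))
      fun s hs => hhpos s (ht.trans hs.le)).ne'
  obtain ⟨hk_zero, hdyn, hprop⟩ :=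
    stmt8_general hr.ne' hh.continuous (htail 0 le_rfl) hk₀.ne' hc₀ hk hc
  exact ⟨hk_zero, fun t _ => hdyn t, fun t ht => (hprop t (htail t ht)).2,
    by simpa only [hh0, one_mul] using (hprop 0 (htail 0 le_rfl)).2⟩
end

section
/- Let γ>1, 0<ρ₁<ρ₂, ω∈(0,1) and r>0, and define f(λ) := ω/(ρ₁+(λ−r)(1−γ)) + (1−ω)/(ρ₂+(λ−r)(1−γ)) − 1/λ for λ in the interval (0, r+ρ₁/(γ−1)). Then: (i) both denominators ρᵢ+(λ−r)(1−γ) are strictly positive on this interval; (ii) f is strictly increasing on (0, r+ρ₁/(γ−1)); (iii) f(λ)→−∞ as λ→0⁺ and f(λ)→+∞ as λ→(r+ρ₁/(γ−1))⁻; hence (iv) there exists a unique λ₁∈(0, r+ρ₁/(γ−1)) with f(λ₁)=0, and λ₁ satisfies the integrability conditions ρ₁+(λ₁−r)(1−γ)>0 and ρ₂+(λ₁−r)(1−γ)>0; moreover λ₁ is the unique positive solution of f(λ)=0 satisfying these two inequalities. -/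
open MeasureTheory

/-!
With `h` the discount function and `L` its Laplace transform, `f(λ) = L((λ - r)(1 - γ)) - 1/λ`.
The transform decreases on the half-line to the right of its largest pole and blows up at that
pole. Since `γ > 1`, the substitution `λ ↦ (λ - r)(1 - γ)` is decreasing and carries the right
endpoint to the pole, so the first summand of `f` increases to `+∞`. The term `-1/λ` makes the
sum strictly increasing and drives it to `-∞` at `0⁺`, where a monotone function stays bounded
above.
-/

section

open Set Filter Topology

section SubOneDiv

variable {𝕜 : Type*} [Field 𝕜] [LinearOrder 𝕜] [IsStrictOrderedRing 𝕜] {g : 𝕜 → 𝕜} {b : 𝕜}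

lemma strictMonoOn_sub_one_div {s : Set 𝕜} (hg : MonotoneOn g s) (hs : s ⊆ Ioi 0) :
    StrictMonoOn (fun x => g x - 1 / x) s := fun _ hx _ hy hxy => by
  simpa only [sub_eq_add_neg] using
    add_lt_add_of_le_of_lt (hg hx hy hxy.le) (neg_lt_neg <| one_div_lt_one_div_of_lt (hs hx) hxy)

variable [TopologicalSpace 𝕜] [OrderTopology 𝕜]

lemma tendsto_sub_one_div_atBot (hg : MonotoneOn g (Ioo 0 b)) (hb : 0 < b) :
    Tendsto (fun x => g x - 1 / x) (𝓝[>] 0) atBot := by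
  obtain ⟨c, hc⟩ := exists_between hb
  have hg_le : ∀ᶠ x in 𝓝[>] 0, g x ≤ g c := by
    filter_upwards [Ioo_mem_nhdsGT hc.1] with x hx
    exact hg ⟨hx.1, hx.2.trans hc.2⟩ hc hx.2.le
  have hinv : Tendsto (fun x : 𝕜 => -(1 / x)) (𝓝[>] 0) atBot := by
    simpa only [one_div] using tendsto_neg_atBot_iff.2 tendsto_inv_nhdsGT_zero
  simpa only [sub_eq_add_neg] using tendsto_atBot_add_left_of_ge' _ _ hg_le hinv

lemma tendsto_sub_one_div_atTop (hg : Tendsto g (𝓝[<] b) atTop) (hb : b ≠ 0) :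
    Tendsto (fun x => g x - 1 / x) (𝓝[<] b) atTop := by
  have hinv : Tendsto (fun x : 𝕜 => -(1 / x)) (𝓝[<] b) (𝓝 (-(1 / b))) := by
    simpa only [one_div] using ((tendsto_inv₀ hb).mono_left nhdsWithin_le_nhds).neg
  simpa only [sub_eq_add_neg] using hg.atTop_add hinv

end SubOneDiv

section Laplace

variable {ι : Type*} [Fintype ι] {ω ρ : ι → ℝ} {m : ℝ}

/-- The Laplace transform `∫₀^∞ h(s) e^{-zs} ds` of the discount function
`h(s) = ∑ᵢ ωᵢ e^{-ρᵢ s}`, in closed form. The integral converges when all `ρᵢ + z > 0`. -/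
noncomputable def expMixtureLaplace (ω ρ : ι → ℝ) (z : ℝ) : ℝ :=
  ∑ i, ω i / (ρ i + z)

lemma antitoneOn_expMixtureLaplace (hω : ∀ i, 0 ≤ ω i) (hρ : ∀ i, m ≤ ρ i) :
    AntitoneOn (expMixtureLaplace ω ρ) (Ioi (-m)) := fun z hz _ _ hzw =>
  Finset.sum_le_sum fun i _ =>
    div_le_div_of_nonneg_left (hω i) (by linarith [hρ i, mem_Ioi.1 hz]) (by gcongr)

lemma continuousOn_expMixtureLaplace (hρ : ∀ i, m ≤ ρ i) :
    ContinuousOn (expMixtureLaplace ω ρ) (Ioi (-m)) :=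
  continuousOn_finsetSum _ fun i _ => ContinuousOn.div (by fun_prop) (by fun_prop)
    fun z hz => (show 0 < ρ i + z by linarith [hρ i, mem_Ioi.1 hz]).ne'

lemma tendsto_expMixtureLaplace_atTop {i₀ : ι} (hω : ∀ i, 0 ≤ ω i) (hω₀ : 0 < ω i₀)
    (hρ : ∀ i, ρ i₀ ≤ ρ i) :
    Tendsto (expMixtureLaplace ω ρ) (𝓝[>] (-ρ i₀)) atTop := by
  have hden : Tendsto (fun z => ρ i₀ + z) (𝓝[>] (-ρ i₀)) (𝓝[>] 0) := by
    have hshift : Continuous fun z => ρ i₀ + z := by fun_prop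
    have hmaps : MapsTo (fun z => ρ i₀ + z) (Ioi (-ρ i₀)) (Ioi 0) := fun z hz =>
      show 0 < ρ i₀ + z from neg_lt_iff_pos_add'.1 hz
    simpa only [add_neg_cancel] using
      hshift.continuousWithinAt.tendsto_nhdsWithin (x := -ρ i₀) hmaps
  have hpole : Tendsto (fun z => ω i₀ / (ρ i₀ + z)) (𝓝[>] (-ρ i₀)) atTop := by
    simpa only [div_eq_mul_inv, Function.comp_apply] using
      (tendsto_inv_nhdsGT_zero.comp hden).const_mul_atTop hω₀
  refine tendsto_atTop_mono' _ ?_ hpole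
  filter_upwards [self_mem_nhdsWithin] with z hz
  refine Finset.single_le_sum (f := fun i => ω i / (ρ i + z)) (fun i _ => ?_) (Finset.mem_univ i₀)
  exact div_nonneg (hω i) (by linarith [hρ i, mem_Ioi.1 hz])

end Laplace

section Shift

variable {γ r ρ x : ℝ}

lemma add_sub_mul_one_sub_pos_iff (hγ : 1 < γ) :
    0 < ρ + (x - r) * (1 - γ) ↔ x < r + ρ / (γ - 1) := by
  rw [← sub_lt_iff_lt_add' (b := r), lt_div_iff₀ (sub_pos.2 hγ)]
  constructor <;> intro h <;> linarith

lemma mapsTo_sub_mul_one_sub (hγ : 1 < γ) :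
    MapsTo (fun x => (x - r) * (1 - γ)) (Iio (r + ρ / (γ - 1))) (Ioi (-ρ)) := fun _ hx =>
  neg_lt_iff_pos_add'.2 ((add_sub_mul_one_sub_pos_iff hγ).2 hx)

lemma antitone_sub_mul_one_sub (hγ : 1 ≤ γ) : Antitone fun x => (x - r) * (1 - γ) :=
  fun _ _ hxy => mul_le_mul_of_nonpos_right (sub_le_sub_right hxy r) (sub_nonpos.2 hγ)

lemma tendsto_sub_mul_one_sub (hγ : 1 < γ) :
    Tendsto (fun x => (x - r) * (1 - γ)) (𝓝[<] (r + ρ / (γ - 1))) (𝓝[>] (-ρ)) := by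
  have hend : (r + ρ / (γ - 1) - r) * (1 - γ) = -ρ := by
    rw [add_sub_cancel_left, ← neg_sub γ, mul_neg, div_mul_cancel₀ _ (sub_pos.2 hγ).ne']
  have hcont : Continuous fun x => (x - r) * (1 - γ) := by fun_prop
  simpa only [hend] using
    hcont.continuousWithinAt.tendsto_nhdsWithin (x := r + ρ / (γ - 1)) (mapsTo_sub_mul_one_sub hγ)

end Shift

section Residual

variable {ι : Type*} [Fintype ι] {ω ρ : ι → ℝ} {i₀ : ι} {γ r : ℝ}

/-- The left-hand side of the equation `f(λ) = 0` for a constant propensity to consume `λ`, for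
the discount function `h(s) = ∑ᵢ ωᵢ e^{-ρᵢ s}`, interest rate `r` and CRRA parameter `γ`. -/
noncomputable def propensityResidual (γ r : ℝ) (ω ρ : ι → ℝ) (x : ℝ) : ℝ :=
  expMixtureLaplace ω ρ ((x - r) * (1 - γ)) - 1 / x

lemma monotoneOn_expMixtureLaplace_comp (hγ : 1 < γ) (hω : ∀ i, 0 ≤ ω i)
    (hρ : ∀ i, ρ i₀ ≤ ρ i) :
    MonotoneOn (fun x => expMixtureLaplace ω ρ ((x - r) * (1 - γ)))
      (Iio (r + ρ i₀ / (γ - 1))) :=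
  (antitoneOn_expMixtureLaplace hω hρ).comp
    ((antitone_sub_mul_one_sub hγ.le).antitoneOn _) (mapsTo_sub_mul_one_sub hγ)

lemma strictMonoOn_propensityResidual (hγ : 1 < γ) (hω : ∀ i, 0 ≤ ω i)
    (hρ : ∀ i, ρ i₀ ≤ ρ i) :
    StrictMonoOn (propensityResidual γ r ω ρ) (Ioo 0 (r + ρ i₀ / (γ - 1))) :=
  strictMonoOn_sub_one_div
    ((monotoneOn_expMixtureLaplace_comp hγ hω hρ).mono Ioo_subset_Iio_self) Ioo_subset_Ioi_self

lemma continuousOn_propensityResidual (hγ : 1 < γ) (hρ : ∀ i, ρ i₀ ≤ ρ i) :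
    ContinuousOn (propensityResidual γ r ω ρ) (Ioo 0 (r + ρ i₀ / (γ - 1))) :=
  ((continuousOn_expMixtureLaplace hρ).comp (by fun_prop)
    ((mapsTo_sub_mul_one_sub hγ).mono_left Ioo_subset_Iio_self)).sub
    (continuousOn_const.div continuousOn_id fun _ hx => hx.1.ne')

lemma tendsto_propensityResidual_atBot (hγ : 1 < γ) (hω : ∀ i, 0 ≤ ω i)
    (hρ : ∀ i, ρ i₀ ≤ ρ i) (hpos : 0 < r + ρ i₀ / (γ - 1)) :
    Tendsto (propensityResidual γ r ω ρ) (𝓝[>] 0) atBot :=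
  tendsto_sub_one_div_atBot
    ((monotoneOn_expMixtureLaplace_comp hγ hω hρ).mono Ioo_subset_Iio_self) hpos

lemma tendsto_propensityResidual_atTop (hγ : 1 < γ) (hω : ∀ i, 0 ≤ ω i) (hω₀ : 0 < ω i₀)
    (hρ : ∀ i, ρ i₀ ≤ ρ i) (hne : r + ρ i₀ / (γ - 1) ≠ 0) :
    Tendsto (propensityResidual γ r ω ρ) (𝓝[<] (r + ρ i₀ / (γ - 1))) atTop :=
  tendsto_sub_one_div_atTop
    ((tendsto_expMixtureLaplace_atTop hω hω₀ hρ).comp (tendsto_sub_mul_one_sub hγ)) hne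

lemma exists_propensityResidual_eq_zero (hγ : 1 < γ) (hω : ∀ i, 0 ≤ ω i) (hω₀ : 0 < ω i₀)
    (hρ : ∀ i, ρ i₀ ≤ ρ i) (hpos : 0 < r + ρ i₀ / (γ - 1)) :
    ∃ x ∈ Ioo 0 (r + ρ i₀ / (γ - 1)), propensityResidual γ r ω ρ x = 0 :=
  (continuousOn_propensityResidual hγ hρ).surjOn_of_tendsto (nonempty_Ioo.2 hpos)
    ((tendsto_comp_coe_Ioo_atBot hpos).2 (tendsto_propensityResidual_atBot hγ hω hρ hpos))
    ((tendsto_comp_coe_Ioo_atTop hpos).2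
      (tendsto_propensityResidual_atTop hγ hω hω₀ hρ hpos.ne'))
    (mem_univ 0)

theorem stmt10_general (hγ : 1 < γ) (hω : ∀ i, 0 ≤ ω i) (hω₀ : 0 < ω i₀)
    (hρ : ∀ i, ρ i₀ ≤ ρ i) (hpos : 0 < r + ρ i₀ / (γ - 1)) :
    (∀ x ∈ Ioo 0 (r + ρ i₀ / (γ - 1)), ∀ i, 0 < ρ i + (x - r) * (1 - γ)) ∧
    StrictMonoOn (propensityResidual γ r ω ρ) (Ioo 0 (r + ρ i₀ / (γ - 1))) ∧
    Tendsto (propensityResidual γ r ω ρ) (𝓝[>] 0) atBot ∧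
    Tendsto (propensityResidual γ r ω ρ) (𝓝[<] (r + ρ i₀ / (γ - 1))) atTop ∧
    ∃ x₁ ∈ Ioo 0 (r + ρ i₀ / (γ - 1)),
      propensityResidual γ r ω ρ x₁ = 0 ∧ (∀ i, 0 < ρ i + (x₁ - r) * (1 - γ)) ∧
      ∀ x, 0 < x → propensityResidual γ r ω ρ x = 0 →
        (∀ i, 0 < ρ i + (x - r) * (1 - γ)) → x = x₁ := by
  have hden : ∀ x ∈ Ioo 0 (r + ρ i₀ / (γ - 1)), ∀ i, 0 < ρ i + (x - r) * (1 - γ) :=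
    fun x hx i => ((add_sub_mul_one_sub_pos_iff hγ).2 hx.2).trans_le (by gcongr; exact hρ i)
  have hmono := strictMonoOn_propensityResidual (r := r) hγ hω hρ
  obtain ⟨x₁, hx₁, hzero⟩ := exists_propensityResidual_eq_zero hγ hω hω₀ hρ hpos
  refine ⟨hden, hmono, tendsto_propensityResidual_atBot hγ hω hρ hpos,
    tendsto_propensityResidual_atTop hγ hω hω₀ hρ hpos.ne', x₁, hx₁, hzero, hden x₁ hx₁, ?_⟩
  intro x hx hfx hint
  have hlt : x < r + ρ i₀ / (γ - 1) := (add_sub_mul_one_sub_pos_iff hγ).1 (hint i₀)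
  exact hmono.injOn ⟨hx, hlt⟩ hx₁ (hfx.trans hzero.symm)

end Residual

end

/-- For the mixture-of-exponentials discount function with
`γ > 1`, `0 < ρ₁ < ρ₂`, `ω ∈ (0,1)`, `r > 0`, the function
`f(λ) = ω/(ρ₁+(λ−r)(1−γ)) + (1−ω)/(ρ₂+(λ−r)(1−γ)) − 1/λ` has strictly positive
denominators on `(0, r+ρ₁/(γ−1))`, is strictly increasing there, tends to `−∞` at
`0⁺` and to `+∞` at the right endpoint; hence it has a unique zero `λ₁` there, which
satisfies the integrability conditions and is the unique positive solution of
`f(λ) = 0` satisfying them. -/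
theorem stmt10
    (γ ρ₁ ρ₂ ω r : ℝ) (hγ : 1 < γ) (hρ₁ : 0 < ρ₁) (hρ : ρ₁ < ρ₂)
    (hω : ω ∈ Set.Ioo (0:ℝ) 1) (hr : 0 < r)
    (f : ℝ → ℝ)
    (hf : ∀ lam : ℝ, f lam =
      ω / (ρ₁ + (lam - r) * (1 - γ)) + (1 - ω) / (ρ₂ + (lam - r) * (1 - γ)) - 1 / lam) :
    -- (i) the denominators are strictly positive on the interval
    (∀ lam ∈ Set.Ioo (0:ℝ) (r + ρ₁ / (γ - 1)),
      0 < ρ₁ + (lam - r) * (1 - γ) ∧ 0 < ρ₂ + (lam - r) * (1 - γ)) ∧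
    -- (ii) `f` is strictly increasing on the interval
    StrictMonoOn f (Set.Ioo (0:ℝ) (r + ρ₁ / (γ - 1))) ∧
    -- (iii) limits at the endpoints
    Filter.Tendsto f (nhdsWithin 0 (Set.Ioi 0)) Filter.atBot ∧
    Filter.Tendsto f
      (nhdsWithin (r + ρ₁ / (γ - 1)) (Set.Iio (r + ρ₁ / (γ - 1)))) Filter.atTop ∧
    -- (iv) existence and uniqueness of the zero `λ₁`
    ∃ lam₁ ∈ Set.Ioo (0:ℝ) (r + ρ₁ / (γ - 1)),
      f lam₁ = 0 ∧
      0 < ρ₁ + (lam₁ - r) * (1 - γ) ∧ 0 < ρ₂ + (lam₁ - r) * (1 - γ) ∧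
      (∀ lam : ℝ, 0 < lam → f lam = 0 →
        0 < ρ₁ + (lam - r) * (1 - γ) → 0 < ρ₂ + (lam - r) * (1 - γ) → lam = lam₁) := by
  obtain rfl : f = propensityResidual γ r ![ω, 1 - ω] ![ρ₁, ρ₂] := funext fun x => by
    simp [hf, propensityResidual, expMixtureLaplace]
  simpa [Fin.forall_fin_two, and_assoc] using
    stmt10_general (ω := ![ω, 1 - ω]) (ρ := ![ρ₁, ρ₂]) (i₀ := 0) hγ
      (Fin.forall_fin_two.2 ⟨hω.1.le, sub_nonneg.2 hω.2.le⟩) hω.1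
      (Fin.forall_fin_two.2 ⟨le_rfl, hρ.le⟩) (add_pos hr (div_pos hρ₁ (sub_pos.2 hγ)))
end

section
/- Let γ>1, 0<ρ₁<ρ₂, ω∈(0,1), r>0, let f and λ₁ be as in the mixture-of-exponentials setup, and set λ̲ := r+(ρ₁−r)/γ and λ̄ := r+(ρ₀−r)/γ with ρ₀ := ωρ₁+(1−ω)ρ₂. Then: (i) λ̲ > 0, λ̲ lies in the interval (0, r+ρ₁/(γ−1)), f(λ̲) < 0, and therefore λ̲ < λ₁; (ii) if moreover r = (ω/ρ₁ + (1−ω)/ρ₂)^{−1} (the harmonic mean of ρ₁ and ρ₂ with weights ω, 1−ω), then λ₁ = r and λ̲ < λ₁ < λ̄. -/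
open MeasureTheory

/-!
Let `P ρ = r + (ρ - r) / γ`, and let `D ρ lam` be the effective discount rate, so that the equation
to solve is `∑ wᵢ / D ρᵢ lam = 1 / lam`. The propensity `P ρ` is the fixed point of `D ρ`. Hence at
`lam = P ρmin` the effective rate of the smallest `ρᵢ` is `lam` itself and the larger ones exceed
it: the average of the reciprocals `1 / D ρᵢ lam` is below `1 / lam`. Since `D` decreases in `lam`,
the function `∑ wᵢ / D ρᵢ lam - 1 / lam` is increasing, so its zero lies to the right of `P ρmin`.
At `lam = r` the effective rates are the `ρᵢ` themselves, so `r` is the zero exactly when it is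
their weighted harmonic mean; this is smaller than the arithmetic mean `ρ₀`, whence `r = P r < P ρ₀`.
-/

section WeightedSums

variable {ι : Type*} [Fintype ι] {w x : ι → ℝ}

theorem sum_div_lt_one_div {a : ℝ} (hw : ∀ i, 0 < w i) (hsum : ∑ i, w i = 1) (ha : 0 < a)
    (hle : ∀ i, a ≤ x i) (hlt : ∃ j, a < x j) : ∑ i, w i / x i < 1 / a := by
  obtain ⟨j, hj⟩ := hlt
  calc ∑ i, w i / x i < ∑ i, w i / a :=
        Finset.sum_lt_sum (fun i _ ↦ div_le_div_of_nonneg_left (hw i).le ha (hle i))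
          ⟨j, Finset.mem_univ j, div_lt_div_of_pos_left (hw j) ha hj⟩
    _ = 1 / a := by rw [← Finset.sum_div, hsum]

theorem inv_sum_div_lt_sum_mul (hw : ∀ i, 0 < w i) (hsum : ∑ i, w i = 1) (hx : ∀ i, 0 < x i)
    (hne : ∃ i j, x i ≠ x j) : (∑ i, w i / x i)⁻¹ < ∑ i, w i * x i := by
  obtain ⟨i, j, hij⟩ := hne
  have hpos : 0 < ∑ i, w i * x i :=
    Finset.sum_pos (fun i _ ↦ mul_pos (hw i) (hx i)) ⟨i, Finset.mem_univ i⟩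
  have jensen : (∑ i, w i * x i)⁻¹ < ∑ i, w i / x i := by
    simpa only [zpow_neg_one, smul_eq_mul, ← div_eq_mul_inv] using
      (strictConvexOn_zpow (m := -1) (by decide) (by decide)).map_sum_lt (fun i _ ↦ hw i) hsum
        (fun i _ ↦ hx i) ⟨i, Finset.mem_univ i, j, Finset.mem_univ j, hij⟩
  exact inv_lt_of_inv_lt₀ hpos jensen

end WeightedSums

/-- The rate `ρ + (lam - r) * (1 - γ)` at which utility discounted at the constant rate `ρ` decays
when the agent consumes the constant fraction `lam` of wealth: wealth then grows at the rate
`r - lam`, and CRRA utility is homogeneous of degree `1 - γ` in it. -/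
def effectiveRate (γ r ρ lam : ℝ) : ℝ :=
  ρ + (lam - r) * (1 - γ)

/-- The constant equilibrium propensity to consume under a constant discount rate `ρ`: the paper's
`λ̲` for `ρ = ρ₁` and `λ̄` for `ρ = ρ₀`. -/
noncomputable def constantPropensity (γ r ρ : ℝ) : ℝ :=
  r + (ρ - r) / γ

/-- The function `f` whose zeros are the constant equilibrium propensities under the discount
function `h s = ∑ i, w i * exp (-ρ i * s)`, for any finite number of exponentials. The integrability
conditions `0 < effectiveRate γ r (ρ i) lam` are not built in; they hold for
`lam < r + ρ i / (γ - 1)` when `1 < γ`. -/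
noncomputable def propensityEquation {ι : Type*} [Fintype ι] (γ r : ℝ) (w ρ : ι → ℝ) (lam : ℝ) :
    ℝ :=
  ∑ i, w i / effectiveRate γ r (ρ i) lam - 1 / lam

section SingleRate

variable {γ r ρ lam : ℝ}

theorem effectiveRate_self (γ r ρ : ℝ) : effectiveRate γ r ρ r = ρ := by
  simp [effectiveRate]

theorem effectiveRate_constantPropensity (hγ : γ ≠ 0) (r ρ : ℝ) :
    effectiveRate γ r ρ (constantPropensity γ r ρ) = constantPropensity γ r ρ := by
  unfold effectiveRate constantPropensity
  field_simp
  ring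

theorem effectiveRate_strictMono (γ r lam : ℝ) : StrictMono (effectiveRate γ r · lam) :=
  fun _ _ h ↦ add_lt_add_left h _

theorem effectiveRate_strictAnti (hγ : 1 < γ) (r ρ : ℝ) : StrictAnti (effectiveRate γ r ρ) :=
  fun _ _ h ↦ add_lt_add_right
    (mul_lt_mul_of_neg_right (sub_lt_sub_right h r) (sub_neg.mpr hγ)) ρ

theorem effectiveRate_pos_iff (hγ : 1 < γ) :
    0 < effectiveRate γ r ρ lam ↔ lam < r + ρ / (γ - 1) := by
  rw [← sub_lt_iff_lt_add', lt_div_iff₀ (sub_pos.mpr hγ), effectiveRate]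
  constructor <;> intro h <;> linarith

theorem constantPropensity_strictMono (hγ : 0 < γ) (r : ℝ) : StrictMono (constantPropensity γ r) :=
  fun _ _ h ↦ add_lt_add_right (div_lt_div_of_pos_right (sub_lt_sub_right h r) hγ) r

theorem constantPropensity_self (γ r : ℝ) : constantPropensity γ r r = r := by
  simp [constantPropensity]

theorem constantPropensity_pos (hγ : 1 < γ) (hr : 0 ≤ r) (hρ : 0 < ρ) :
    0 < constantPropensity γ r ρ := by
  have hγ₀ : 0 < γ := one_pos.trans hγ
  have convex_comb : constantPropensity γ r ρ = ((γ - 1) * r + ρ) / γ := by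
    unfold constantPropensity
    field_simp
    ring
  rw [convex_comb]
  exact div_pos (add_pos_of_nonneg_of_pos (mul_nonneg (sub_pos.mpr hγ).le hr) hρ) hγ₀

theorem constantPropensity_mem_Ioo (hγ : 1 < γ) (hr : 0 ≤ r) (hρ : 0 < ρ) :
    constantPropensity γ r ρ ∈ Set.Ioo 0 (r + ρ / (γ - 1)) := by
  have hpos := constantPropensity_pos hγ hr hρ
  refine ⟨hpos, (effectiveRate_pos_iff hγ).mp ?_⟩
  rwa [effectiveRate_constantPropensity (one_pos.trans hγ).ne']

end SingleRate

section Mixture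

variable {ι : Type*} [Fintype ι] {γ r ρmin : ℝ} {w ρ : ι → ℝ}

theorem propensityEquation_strictMonoOn (hγ : 1 < γ) (hw : ∀ i, 0 ≤ w i) (hmin : ∀ i, ρmin ≤ ρ i) :
    StrictMonoOn (propensityEquation γ r w ρ) (Set.Ioo 0 (r + ρmin / (γ - 1))) := by
  intro a ha b hb hab
  have rate_pos (i : ι) : 0 < effectiveRate γ r (ρ i) b :=
    ((effectiveRate_pos_iff hγ).mpr hb.2).trans_le
      ((effectiveRate_strictMono γ r b).monotone (hmin i))
  have sum_le : ∑ i, w i / effectiveRate γ r (ρ i) a ≤ ∑ i, w i / effectiveRate γ r (ρ i) b :=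
    Finset.sum_le_sum fun i _ ↦ div_le_div_of_nonneg_left (hw i) (rate_pos i)
      (effectiveRate_strictAnti hγ r (ρ i) hab).le
  have inv_lt : 1 / b < 1 / a := one_div_lt_one_div_of_lt ha.1 hab
  unfold propensityEquation
  linarith

theorem propensityEquation_constantPropensity_neg (hγ : γ ≠ 0) (hw : ∀ i, 0 < w i)
    (hsum : ∑ i, w i = 1) (hmin : ∀ i, ρmin ≤ ρ i) (hlt : ∃ j, ρmin < ρ j)
    (hpos : 0 < constantPropensity γ r ρmin) :
    propensityEquation γ r w ρ (constantPropensity γ r ρmin) < 0 := by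
  have fixed := effectiveRate_constantPropensity hγ r ρmin
  have rate_mono := effectiveRate_strictMono γ r (constantPropensity γ r ρmin)
  exact sub_neg.mpr <| sum_div_lt_one_div hw hsum hpos
    (fun i ↦ fixed.symm.trans_le (rate_mono.monotone (hmin i)))
    (hlt.imp fun _ hj ↦ fixed.symm.trans_lt (rate_mono hj))

theorem propensityEquation_self_eq_zero_iff :
    propensityEquation γ r w ρ r = 0 ↔ r = (∑ i, w i / ρ i)⁻¹ := by
  simp only [propensityEquation, effectiveRate_self, sub_eq_zero, one_div]
  rw [eq_comm, inv_eq_iff_eq_inv]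

theorem stmt11_general (hγ : 1 < γ) (hr : 0 < r) (hw : ∀ i, 0 < w i) (hsum : ∑ i, w i = 1)
    (hρmin : 0 < ρmin) (hmin : ∀ i, ρmin ≤ ρ i) (hne : ∃ i j, ρ i ≠ ρ j)
    {lam₁ : ℝ} (hlam₁ : lam₁ ∈ Set.Ioo 0 (r + ρmin / (γ - 1)))
    (hzero : propensityEquation γ r w ρ lam₁ = 0) :
    constantPropensity γ r ρmin ∈ Set.Ioo 0 (r + ρmin / (γ - 1)) ∧
    propensityEquation γ r w ρ (constantPropensity γ r ρmin) < 0 ∧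
    constantPropensity γ r ρmin < lam₁ ∧
    (r = (∑ i, w i / ρ i)⁻¹ →
      lam₁ = r ∧ lam₁ < constantPropensity γ r (∑ i, w i * ρ i)) := by
  have hγ₀ : 0 < γ := one_pos.trans hγ
  have hlt : ∃ j, ρmin < ρ j := by
    obtain ⟨i, j, hij⟩ := hne
    by_contra! hge
    exact hij (((hge i).antisymm (hmin i)).trans ((hmin j).antisymm (hge j)))
  have mono := propensityEquation_strictMonoOn (r := r) hγ (fun i ↦ (hw i).le) hmin
  have hmem := constantPropensity_mem_Ioo hγ hr.le hρmin
  have hneg := propensityEquation_constantPropensity_neg hγ₀.ne' hw hsum hmin hlt hmem.1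
  refine ⟨hmem, hneg, (mono.lt_iff_lt hmem hlam₁).mp (hneg.trans_eq hzero.symm), fun harm ↦ ?_⟩
  have r_mem : r ∈ Set.Ioo 0 (r + ρmin / (γ - 1)) :=
    ⟨hr, lt_add_of_pos_right r (div_pos hρmin (sub_pos.mpr hγ))⟩
  have lam₁_eq : lam₁ = r :=
    mono.injOn hlam₁ r_mem (hzero.trans (propensityEquation_self_eq_zero_iff.mpr harm).symm)
  have r_lt_mean : r < ∑ i, w i * ρ i :=
    harm.trans_lt (inv_sum_div_lt_sum_mul hw hsum (fun i ↦ hρmin.trans_le (hmin i)) hne)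
  refine ⟨lam₁_eq, ?_⟩
  calc lam₁ = constantPropensity γ r r := lam₁_eq.trans (constantPropensity_self γ r).symm
    _ < constantPropensity γ r (∑ i, w i * ρ i) := constantPropensity_strictMono hγ₀ r r_lt_mean

end Mixture

theorem propensityEquation_fin_two (γ r ω ρ₁ ρ₂ lam : ℝ) :
    propensityEquation γ r ![ω, 1 - ω] ![ρ₁, ρ₂] lam =
      ω / (ρ₁ + (lam - r) * (1 - γ)) + (1 - ω) / (ρ₂ + (lam - r) * (1 - γ)) - 1 / lam := by
  simp [propensityEquation, effectiveRate]

/-- In the mixture-of-exponentials setup with `γ > 1`,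
`0 < ρ₁ < ρ₂`, `ω ∈ (0,1)`, `r > 0`, let `λ₁` be the unique zero of `f` in
`(0, r+ρ₁/(γ−1))`, and set `λ̲ = r+(ρ₁−r)/γ`, `λ̄ = r+(ρ₀−r)/γ` with
`ρ₀ = ωρ₁+(1−ω)ρ₂`.  Then `λ̲ > 0`, `λ̲` lies in the interval, `f(λ̲) < 0`, hence
`λ̲ < λ₁`; and if `r` equals the weighted harmonic mean `(ω/ρ₁+(1−ω)/ρ₂)⁻¹`, then
`λ₁ = r` and `λ̲ < λ₁ < λ̄`. -/
theorem stmt11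
    (γ ρ₁ ρ₂ ω r : ℝ) (hγ : 1 < γ) (hρ₁ : 0 < ρ₁) (hρ : ρ₁ < ρ₂)
    (hω : ω ∈ Set.Ioo (0:ℝ) 1) (hr : 0 < r)
    (f : ℝ → ℝ)
    (hf : ∀ lam : ℝ, f lam =
      ω / (ρ₁ + (lam - r) * (1 - γ)) + (1 - ω) / (ρ₂ + (lam - r) * (1 - γ)) - 1 / lam)
    (lam₁ : ℝ) (hlam₁ : lam₁ ∈ Set.Ioo (0:ℝ) (r + ρ₁ / (γ - 1))) (hflam₁ : f lam₁ = 0)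
    (huniq : ∀ lam ∈ Set.Ioo (0:ℝ) (r + ρ₁ / (γ - 1)), f lam = 0 → lam = lam₁) :
    -- (i)
    0 < r + (ρ₁ - r) / γ ∧
    r + (ρ₁ - r) / γ ∈ Set.Ioo (0:ℝ) (r + ρ₁ / (γ - 1)) ∧
    f (r + (ρ₁ - r) / γ) < 0 ∧
    r + (ρ₁ - r) / γ < lam₁ ∧
    -- (ii)
    (r = (ω / ρ₁ + (1 - ω) / ρ₂)⁻¹ →
      lam₁ = r ∧ r + (ρ₁ - r) / γ < lam₁ ∧
        lam₁ < r + ((ω * ρ₁ + (1 - ω) * ρ₂) - r) / γ) := by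
  obtain rfl : f = propensityEquation γ r ![ω, 1 - ω] ![ρ₁, ρ₂] :=
    funext fun lam ↦ (hf lam).trans (propensityEquation_fin_two γ r ω ρ₁ ρ₂ lam).symm
  obtain ⟨hmem, hneg, hlt, hharm⟩ := stmt11_general hγ hr (w := ![ω, 1 - ω]) (ρ := ![ρ₁, ρ₂])
    (by simpa [Fin.forall_fin_two] using hω) (by simp) hρ₁
    (by simpa [Fin.forall_fin_two] using hρ.le) ⟨0, 1, hρ.ne⟩ hlam₁ hflam₁
  simp only [Fin.sum_univ_two, Matrix.cons_val_zero, Matrix.cons_val_one] at hharm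
  exact ⟨hmem.1, hmem, hneg, hlt, fun h ↦ ⟨(hharm h).1, hlt, (hharm h).2⟩⟩
end

section
/- Let 0<γ<1, δ∈(0,1), τ>0, and ρ̃ := ρ − r(1−γ) > 0, and define f(λ) := γ − (1−δ)·e^{−(ρ̃+λ(1−γ))τ} − ρ̃/λ for λ>0. Then f is strictly increasing on (0,∞), f(λ)→−∞ as λ→0⁺, and f(λ)→γ as λ→∞; hence there exists a unique λ₂>0 with f(λ₂)=0, and λ₂ automatically satisfies the integrability condition ρ̃ + λ₂(1−γ) > 0. -/
open MeasureTheory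

/-!
Write `p = ρ̃` and `f(λ) = u(λ) - p / λ`, where `u(λ) = γ - (1 - δ) e^{-(p + λ(1 - γ))τ}`.
The function `u` is continuous, nondecreasing and tends to `γ` at infinity, while the hyperbola
`λ ↦ p / λ` is strictly decreasing on `(0, ∞)`, blows up at `0⁺` and vanishes at infinity.
So `f` increases strictly from `-∞` to `γ > 0`, and the intermediate value theorem gives its
unique zero.
-/

open Set Filter Topology

section IntermediateValue

variable {X α : Type*} [ConditionallyCompleteLinearOrder X] [TopologicalSpace X] [OrderTopology X]
  [DenselyOrdered X] [NoMaxOrder X] [LinearOrder α] [TopologicalSpace α] [OrderClosedTopology α]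

theorem existsUnique_mem_Ioi_eq_of_tendsto {f : X → α} {a : X} {v y : α}
    (hcont : ContinuousOn f (Ioi a)) (hinj : InjOn f (Ioi a))
    (hbot : Tendsto f (𝓝[>] a) atBot) (htop : Tendsto f atTop (𝓝 v)) (hy : y < v) :
    ∃! x, x ∈ Ioi a ∧ f x = y := by
  have : Nonempty X := ⟨a⟩
  obtain ⟨x, hx, hxy⟩ := isPreconnected_Ioi.intermediate_value_Iio
    (l₁ := 𝓝[>] a) inf_le_right
    (le_principal_iff.mpr (Ioi_mem_atTop a)) hcont hbot htop hy
  exact ⟨x, ⟨hx, hxy⟩, fun z hz => hinj hz.1 hx (hz.2.trans hxy.symm)⟩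

end IntermediateValue

section SubConstDiv

variable {𝕜 : Type*} [Field 𝕜] [LinearOrder 𝕜] [IsStrictOrderedRing 𝕜] {u : 𝕜 → 𝕜} {p c : 𝕜}

theorem strictMonoOn_sub_const_div (hu : MonotoneOn u (Ioi 0)) (hp : 0 < p) :
    StrictMonoOn (fun x => u x - p / x) (Ioi 0) := fun _ hx _ hy hxy =>
  (sub_lt_sub_left (div_lt_div_of_pos_left hp hx hxy) _).trans_le
    (sub_le_sub_right (hu hx hy hxy.le) _)

variable [TopologicalSpace 𝕜] [OrderTopology 𝕜]

theorem tendsto_sub_const_div_nhdsGT_zero (hu : Tendsto u (𝓝[>] 0) (𝓝 c)) (hp : 0 < p) :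
    Tendsto (fun x => u x - p / x) (𝓝[>] 0) atBot := by
  have hdiv : Tendsto (fun x => p / x) (𝓝[>] 0) atTop := by
    simpa only [div_eq_mul_inv] using tendsto_inv_nhdsGT_zero.const_mul_atTop hp
  simpa only [sub_eq_add_neg, Function.comp_def] using
    hu.add_atBot (tendsto_neg_atTop_atBot.comp hdiv)

theorem tendsto_sub_const_div_atTop (hu : Tendsto u atTop (𝓝 c)) (p : 𝕜) :
    Tendsto (fun x => u x - p / x) atTop (𝓝 c) := by
  simpa only [sub_zero, id_eq] using hu.sub (tendsto_id.const_div_atTop p)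

theorem continuousOn_sub_const_div (hu : ContinuousOn u (Ioi 0)) (p : 𝕜) :
    ContinuousOn (fun x => u x - p / x) (Ioi 0) :=
  hu.sub (continuousOn_const.div continuousOn_id fun _ hx => ne_of_gt hx)

end SubConstDiv

section ExponentialSaturation

variable {b k t : ℝ}

theorem monotone_sub_mul_exp_neg_affine (a p : ℝ) (hb : 0 ≤ b) (hkt : 0 ≤ k * t) :
    Monotone fun x => a - b * Real.exp (-(p + x * k) * t) := by
  intro x y hxy
  have hexponent : -(p + y * k) * t ≤ -(p + x * k) * t := by
    linarith [mul_le_mul_of_nonneg_right hxy hkt]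
  exact sub_le_sub_left (mul_le_mul_of_nonneg_left (Real.exp_le_exp.mpr hexponent) hb) a

theorem tendsto_sub_mul_exp_neg_affine_atTop (a b p : ℝ) (hkt : 0 < k * t) :
    Tendsto (fun x => a - b * Real.exp (-(p + x * k) * t)) atTop (𝓝 a) := by
  have hexponent : Tendsto (fun x => -(p + x * k) * t) atTop atBot := by
    have h := tendsto_atBot_add_const_left atTop (-p * t)
      (tendsto_neg_atTop_atBot.comp (tendsto_id.atTop_mul_const hkt))
    exact h.congr fun x => by simp only [Function.comp_apply, id_eq]; ring
  simpa only [mul_zero, sub_zero, Function.comp_def] using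
    ((Real.tendsto_exp_atBot.comp hexponent).const_mul b).const_sub a

end ExponentialSaturation

theorem stmt12_general
    (γ δ τ ρ r : ℝ) (hγ0 : 0 < γ) (hγ1 : γ < 1)
    (hδ : δ ≤ 1) (hτ : 0 < τ)
    (hρt : 0 < ρ - r * (1 - γ))
    (f : ℝ → ℝ)
    (hf : ∀ lam : ℝ, f lam =
      γ - (1 - δ) * Real.exp (-((ρ - r * (1 - γ)) + lam * (1 - γ)) * τ)
        - (ρ - r * (1 - γ)) / lam) :
    StrictMonoOn f (Set.Ioi 0) ∧
    Filter.Tendsto f (nhdsWithin 0 (Set.Ioi 0)) Filter.atBot ∧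
    Filter.Tendsto f Filter.atTop (nhds γ) ∧
    ∃ lam₂ : ℝ, 0 < lam₂ ∧ f lam₂ = 0 ∧
      0 < (ρ - r * (1 - γ)) + lam₂ * (1 - γ) ∧
      ∀ lam : ℝ, 0 < lam → f lam = 0 → lam = lam₂ := by
  obtain rfl : f = _ := funext hf
  set p := ρ - r * (1 - γ)
  have hk : 0 < (1 - γ) * τ := mul_pos (sub_pos.mpr hγ1) hτ
  have hcont : Continuous fun x => γ - (1 - δ) * Real.exp (-(p + x * (1 - γ)) * τ) := by fun_prop
  have hmono := strictMonoOn_sub_const_div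
    ((monotone_sub_mul_exp_neg_affine γ p (sub_nonneg.mpr hδ) hk.le).monotoneOn _) hρt
  have hbot := tendsto_sub_const_div_nhdsGT_zero (hcont.continuousWithinAt (x := 0)) hρt
  have htop := tendsto_sub_const_div_atTop
    (tendsto_sub_mul_exp_neg_affine_atTop γ (1 - δ) p hk) p
  obtain ⟨lam₂, ⟨hpos, hzero⟩, hunique⟩ := existsUnique_mem_Ioi_eq_of_tendsto
    (continuousOn_sub_const_div hcont.continuousOn p) hmono.injOn hbot htop hγ0
  exact ⟨hmono, hbot, htop, lam₂, hpos, hzero,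
    add_pos hρt (mul_pos hpos (sub_pos.mpr hγ1)), fun lam hlam h => hunique lam ⟨hlam, h⟩⟩

/-- For the quasi-hyperbolic discount function with `0 < γ < 1`,
`δ ∈ (0,1)`, `τ > 0` and `ρ̃ := ρ − r(1−γ) > 0`, the function
`f(λ) = γ − (1−δ)·e^{−(ρ̃+λ(1−γ))τ} − ρ̃/λ` is strictly increasing on `(0,∞)`,
tends to `−∞` as `λ → 0⁺` and to `γ` as `λ → ∞`; hence there is a unique `λ₂ > 0`
with `f(λ₂) = 0`, and it automatically satisfies the integrability condition
`ρ̃ + λ₂(1−γ) > 0`. -/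
theorem stmt12
    (γ δ τ ρ r : ℝ) (hγ0 : 0 < γ) (hγ1 : γ < 1)
    (hδ : δ ∈ Set.Ioo (0:ℝ) 1) (hτ : 0 < τ)
    (hρt : 0 < ρ - r * (1 - γ))
    (f : ℝ → ℝ)
    (hf : ∀ lam : ℝ, f lam =
      γ - (1 - δ) * Real.exp (-((ρ - r * (1 - γ)) + lam * (1 - γ)) * τ)
        - (ρ - r * (1 - γ)) / lam) :
    StrictMonoOn f (Set.Ioi 0) ∧
    Filter.Tendsto f (nhdsWithin 0 (Set.Ioi 0)) Filter.atBot ∧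
    Filter.Tendsto f Filter.atTop (nhds γ) ∧
    ∃ lam₂ : ℝ, 0 < lam₂ ∧ f lam₂ = 0 ∧
      0 < (ρ - r * (1 - γ)) + lam₂ * (1 - γ) ∧
      ∀ lam : ℝ, 0 < lam → f lam = 0 → lam = lam₂ := by
  exact stmt12_general γ δ τ ρ r hγ0 hγ1 hδ.2.le hτ hρt f hf
end

section
/- Let δ∈(0,1), ρ̃ := ρ − r(1−γ) > 0, and γ>0 with δ+γ−1>0. Suppose that for each τ>0, λ(τ)>0 satisfies the quasi-hyperbolic fixed-point equation γ − (1−δ)·e^{−(ρ̃+λ(τ)(1−γ))τ} − ρ̃/λ(τ) = 0, and that λ(τ) converges to some limit L∈(0,∞) as τ→0⁺. Then L = ρ̃/(δ+γ−1) = (ρ + r(γ−1))/(δ+γ−1); this limit is the constant propensity to consume in the instant-gratification model of Harris and Laibson, and when γ>1 it satisfies the integrability condition ρ̃ + L(1−γ) > 0. -/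
open MeasureTheory

/-!
Write `ρ̃ = ρ - r (1 - γ)`. Multiplied by `λ(τ)`, the fixed-point equation reads
`λ(τ) (γ - (1 - δ) e^{-(ρ̃ + λ(τ) (1 - γ)) τ}) = ρ̃`. As `λ(τ)` stays bounded, the exponential tends
to `1`, so `L (δ + γ - 1) = ρ̃`. Since `L ≥ 0` and `ρ̃ > 0`, both factors are positive. The
integrability condition holds because `ρ̃ + L (1 - γ) = δ L`.
-/

open Filter Topology

/-- The fixed-point equation for a constant propensity to consume `c` out of wealth under
quasi-hyperbolic discounting with commitment span `τ`. The discount and interest rates enter only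
through `ρ' = ρ - r (1 - γ)`, written `ρ̃` in the paper. At `c = 0` the quotient `ρ' / c` is `0`. -/
def IsConstantPropensity (γ δ ρ' τ c : ℝ) : Prop :=
  γ - (1 - δ) * Real.exp (-(ρ' + c * (1 - γ)) * τ) - ρ' / c = 0

theorem IsConstantPropensity.mul_eq {γ δ ρ' τ c : ℝ} (h : IsConstantPropensity γ δ ρ' τ c)
    (hc : c ≠ 0) : c * (γ - (1 - δ) * Real.exp (-(ρ' + c * (1 - γ)) * τ)) = ρ' := by
  rw [sub_eq_zero.mp h, mul_div_cancel₀ ρ' hc]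

theorem add_mul_one_sub_eq_mul {γ δ ρ' c : ℝ} (h : c * (δ + γ - 1) = ρ') :
    ρ' + c * (1 - γ) = δ * c := by
  rw [← h]
  ring

section Limit

variable {ι : Type*} {l : Filter ι}

theorem tendsto_exp_neg_mul_one {a τ : ι → ℝ} {A : ℝ} (ha : Tendsto a l (𝓝 A))
    (hτ : Tendsto τ l (𝓝 0)) : Tendsto (fun i ↦ Real.exp (-a i * τ i)) l (𝓝 1) := by
  simpa only [mul_zero, Real.exp_zero] using (ha.neg.mul hτ).rexp

variable [l.NeBot] {γ δ ρ' L : ℝ} {τ lam : ι → ℝ}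

theorem mul_eq_of_tendsto_propensity
    (hlam : ∀ᶠ i in l, lam i ≠ 0 ∧ IsConstantPropensity γ δ ρ' (τ i) (lam i))
    (hτ : Tendsto τ l (𝓝 0)) (hL : Tendsto lam l (𝓝 L)) :
    L * (δ + γ - 1) = ρ' := by
  have hexp : Tendsto (fun i ↦ Real.exp (-(ρ' + lam i * (1 - γ)) * τ i)) l (𝓝 1) :=
    tendsto_exp_neg_mul_one ((hL.mul_const (1 - γ)).const_add ρ') hτ
  have hlim := hL.mul ((hexp.const_mul (1 - δ)).const_sub γ)
  have hconst : (fun i ↦ lam i * (γ - (1 - δ) * Real.exp (-(ρ' + lam i * (1 - γ)) * τ i)))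
      =ᶠ[l] fun _ ↦ ρ' :=
    hlam.mono fun _ hi ↦ hi.2.mul_eq hi.1
  calc
    L * (δ + γ - 1) = L * (γ - (1 - δ) * 1) := by ring
    _ = ρ' := tendsto_nhds_unique_of_eventuallyEq hlim tendsto_const_nhds hconst

theorem pos_and_pos_of_tendsto_propensity (hρ' : 0 < ρ')
    (hlam : ∀ᶠ i in l, 0 < lam i ∧ IsConstantPropensity γ δ ρ' (τ i) (lam i))
    (hτ : Tendsto τ l (𝓝 0)) (hL : Tendsto lam l (𝓝 L)) :
    0 < L ∧ 0 < δ + γ - 1 := by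
  have hmul : L * (δ + γ - 1) = ρ' :=
    mul_eq_of_tendsto_propensity (hlam.mono fun _ hi ↦ ⟨hi.1.ne', hi.2⟩) hτ hL
  have hL_nonneg : 0 ≤ L := ge_of_tendsto hL (hlam.mono fun _ hi ↦ hi.1.le)
  have hfactor : 0 < δ + γ - 1 := pos_of_mul_pos_right (hmul ▸ hρ') hL_nonneg
  exact ⟨pos_of_mul_pos_left (hmul ▸ hρ') hfactor.le, hfactor⟩

end Limit

theorem stmt14_general {ι : Type*} {l : Filter ι} [l.NeBot] {γ δ ρ r L : ℝ} {τ lam : ι → ℝ}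
    (hδ : 0 < δ) (hρ' : 0 < ρ - r * (1 - γ))
    (hlam : ∀ᶠ i in l, 0 < lam i ∧
      IsConstantPropensity γ δ (ρ - r * (1 - γ)) (τ i) (lam i))
    (hτ : Tendsto τ l (𝓝 0)) (hL : Tendsto lam l (𝓝 L)) :
    0 < δ + γ - 1 ∧
    L = (ρ - r * (1 - γ)) / (δ + γ - 1) ∧
    L = (ρ + r * (γ - 1)) / (δ + γ - 1) ∧
    0 < (ρ - r * (1 - γ)) + L * (1 - γ) := by
  obtain ⟨hL_pos, hfactor⟩ := pos_and_pos_of_tendsto_propensity hρ' hlam hτ hL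
  have hmul : L * (δ + γ - 1) = ρ - r * (1 - γ) :=
    mul_eq_of_tendsto_propensity (hlam.mono fun _ hi ↦ ⟨hi.1.ne', hi.2⟩) hτ hL
  have hLeq : L = (ρ - r * (1 - γ)) / (δ + γ - 1) := eq_div_of_mul_eq hfactor.ne' hmul
  have hrate : ρ - r * (1 - γ) = ρ + r * (γ - 1) := by ring
  refine ⟨hfactor, hLeq, hrate ▸ hLeq, ?_⟩
  rw [add_mul_one_sub_eq_mul hmul]
  exact mul_pos hδ hL_pos

/-- In the quasi-hyperbolic model, suppose for each commitment span
`τ > 0` the propensity `λ(τ) > 0` solves the fixed-point equation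
`γ − (1−δ)·e^{−(ρ̃+λ(τ)(1−γ))τ} − ρ̃/λ(τ) = 0` (with `ρ̃ = ρ − r(1−γ) > 0`), and
`λ(τ) → L ∈ (0,∞)` as `τ → 0⁺`.  Then `L = ρ̃/(δ+γ−1) = (ρ+r(γ−1))/(δ+γ−1)` — the
instant-gratification propensity of Harris and Laibson — and for `γ > 1` it satisfies
the integrability condition `ρ̃ + L(1−γ) > 0`. -/
theorem stmt14
    (γ δ ρ r : ℝ) (hδ : δ ∈ Set.Ioo (0:ℝ) 1) (hγ : 0 < γ)
    (hρt : 0 < ρ - r * (1 - γ)) (hδγ : 0 < δ + γ - 1)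
    (lam : ℝ → ℝ) (L : ℝ) (hL0 : 0 < L)
    (hlam : ∀ τ > (0:ℝ), 0 < lam τ ∧
      γ - (1 - δ) * Real.exp (-((ρ - r * (1 - γ)) + lam τ * (1 - γ)) * τ)
        - (ρ - r * (1 - γ)) / lam τ = 0)
    (hconv : Filter.Tendsto lam (nhdsWithin 0 (Set.Ioi 0)) (nhds L)) :
    L = (ρ - r * (1 - γ)) / (δ + γ - 1) ∧
    L = (ρ + r * (γ - 1)) / (δ + γ - 1) ∧
    (1 < γ → 0 < (ρ - r * (1 - γ)) + L * (1 - γ)) := by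
  have hev : ∀ᶠ τ in 𝓝[>] (0 : ℝ), 0 < lam τ ∧
      IsConstantPropensity γ δ (ρ - r * (1 - γ)) τ (lam τ) :=
    eventually_mem_nhdsWithin.mono hlam
  obtain ⟨-, hL, hL', hint⟩ :=
    stmt14_general hδ.1 hρt hev (tendsto_id.mono_left nhdsWithin_le_nhds) hconv
  exact ⟨hL, hL', fun _ ↦ hint⟩
end

section
/- Let γ>1, ρ>0, r>0, and α,β>0 with β≤α (so that ∫₀^∞ (1+αs)^{−β/α} ds = +∞), and define f(λ) := ∫₀^∞ (1+αs)^{−β/α}·e^{−(ρ+(λ−r)(1−γ))s} ds − 1/λ for λ in the interval (0, r+ρ/(γ−1)), on which the exponent ρ+(λ−r)(1−γ) is strictly positive so the integral converges. Then f is strictly increasing on this interval, f(λ)→−∞ as λ→0⁺ and f(λ)→+∞ as λ→(r+ρ/(γ−1))⁻; hence there exists a unique λ₃ ∈ (0, r+ρ/(γ−1)) with f(λ₃)=0, and λ₃ satisfies the integrability condition ρ + (λ₃−r)(1−γ) > 0. -/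
open MeasureTheory

/-!
Write `w` for the discount weight and `L` for its Laplace transform. Since
`ρ + (λ - r)(1 - γ) = (γ - 1)(M - λ)` with `M = r + ρ / (γ - 1)`, the function of interest is
`λ ↦ L ((γ - 1)(M - λ)) - 1 / λ`, and only three properties of `L` matter: it is antitone and
continuous on `(0, ∞)`, and it blows up at `0⁺`. The last one holds because `w` is not integrable:
from `exp (-s / T) ≥ exp (-1)` on `(0, T]` we get `∫₀ᵀ w ≤ e * L (1 / T)`, so a bound on `L` near
`0` would bound all the truncated integrals of `w`. The weight `(1 + α s) ^ (-β / α)` is not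
integrable exactly when `β ≤ α`.
-/

open Filter Set Topology

section LaplaceTransform

variable {w : ℝ → ℝ} {j k T : ℝ}

/-- Convergence at `k` of the one-sided Laplace transform of the weight `w`. Only the values of `w`
on `(0, ∞)` matter. -/
def LaplaceIntegrable (w : ℝ → ℝ) (k : ℝ) : Prop :=
  IntegrableOn (fun s ↦ w s * Real.exp (-k * s)) (Ioi 0)

/-- The one-sided Laplace transform of the weight `w`, equal to the junk value `0` at `k` unless
`LaplaceIntegrable w k`. -/
noncomputable def laplaceTransform (w : ℝ → ℝ) (k : ℝ) : ℝ :=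
  ∫ s in Ioi (0 : ℝ), w s * Real.exp (-k * s)

lemma LaplaceIntegrable.mono (hj : LaplaceIntegrable w j) (hjk : j ≤ k) :
    LaplaceIntegrable w k := by
  have hbound : ∀ᵐ s ∂volume.restrict (Ioi (0 : ℝ)), ‖Real.exp (-(k - j) * s)‖ ≤ 1 := by
    filter_upwards [ae_restrict_mem measurableSet_Ioi] with s hs
    rw [Real.norm_of_nonneg (Real.exp_nonneg _), Real.exp_le_one_iff, neg_mul, neg_nonpos]
    exact mul_nonneg (sub_nonneg.2 hjk) (le_of_lt hs)
  refine (hj.mul_bdd (by fun_prop) hbound).congr (.of_forall fun s ↦ ?_)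
  simp only [mul_assoc, ← Real.exp_add]
  ring_nf

lemma LaplaceIntegrable.integrableOn_Ioc (hk : LaplaceIntegrable w k) (T : ℝ) :
    IntegrableOn w (Ioc 0 T) := by
  have hexp : ContinuousOn (fun s ↦ Real.exp (k * s)) (Icc 0 T) := by fun_prop
  refine (IntegrableOn.continuousOn_mul_of_subset hexp (hk.mono_set Ioc_subset_Ioi_self)
    isCompact_Icc measurableSet_Ioc Ioc_subset_Icc_self).congr (.of_forall fun s ↦ ?_)
  simp [mul_left_comm, ← Real.exp_add]

lemma antitoneOn_laplaceTransform (hw : ∀ s ∈ Ioi (0 : ℝ), 0 ≤ w s) :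
    AntitoneOn (laplaceTransform w) {k | LaplaceIntegrable w k} := by
  intro j hj k hk hjk
  refine setIntegral_mono_on hk hj measurableSet_Ioi fun s hs ↦ ?_
  have hexp : Real.exp (-k * s) ≤ Real.exp (-j * s) := by
    have : 0 ≤ s := le_of_lt hs
    gcongr
  exact mul_le_mul_of_nonneg_left hexp (hw s hs)

lemma LaplaceIntegrable.continuousAt_laplaceTransform (hj : LaplaceIntegrable w j) (hjk : j < k) :
    ContinuousAt (laplaceTransform w) k := by
  refine continuousAt_of_dominated (bound := fun s ↦ ‖w s * Real.exp (-j * s)‖) ?_ ?_ hj.norm ?_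
  · filter_upwards [lt_mem_nhds hjk] with x hx
    exact (hj.mono hx.le).aestronglyMeasurable
  · filter_upwards [lt_mem_nhds hjk] with x hx
    filter_upwards [ae_restrict_mem measurableSet_Ioi] with s hs
    simp only [norm_mul, Real.norm_eq_abs, Real.abs_exp]
    gcongr
    exact le_of_lt hs
  · exact .of_forall fun s ↦ by fun_prop

lemma exp_neg_mul_mul_intervalIntegral_le_laplaceTransform (hw : ∀ s ∈ Ioi (0 : ℝ), 0 ≤ w s)
    (hk₀ : 0 ≤ k) (hk : LaplaceIntegrable w k) (hT : 0 ≤ T) :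
    Real.exp (-k * T) * ∫ s in 0..T, w s ≤ laplaceTransform w k := by
  rw [intervalIntegral.integral_of_le hT, ← integral_const_mul]
  calc ∫ s in Ioc 0 T, Real.exp (-k * T) * w s
      ≤ ∫ s in Ioc 0 T, w s * Real.exp (-k * s) := by
        refine setIntegral_mono_on ((hk.integrableOn_Ioc T).const_mul _)
          (hk.mono_set Ioc_subset_Ioi_self) measurableSet_Ioc fun s hs ↦ ?_
        have hexp : Real.exp (-k * T) ≤ Real.exp (-k * s) :=
          Real.exp_le_exp.2 (mul_le_mul_of_nonpos_left hs.2 (neg_nonpos.2 hk₀))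
        rw [mul_comm]
        exact mul_le_mul_of_nonneg_left hexp (hw s hs.1)
    _ ≤ laplaceTransform w k := by
        refine setIntegral_mono_set hk ?_ Ioc_subset_Ioi_self.eventuallyLE
        filter_upwards [ae_restrict_mem measurableSet_Ioi] with s hs
        exact mul_nonneg (hw s hs) (Real.exp_nonneg _)

lemma integrableOn_Ioi_of_laplaceTransform_le {C : ℝ} (hw : ∀ s ∈ Ioi (0 : ℝ), 0 ≤ w s)
    (hint : ∀ k > 0, LaplaceIntegrable w k) (hC : ∀ k > 0, laplaceTransform w k ≤ C) :
    IntegrableOn w (Ioi 0) := by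
  refine integrableOn_Ioi_of_intervalIntegral_norm_bounded (Real.exp 1 * C) 0
    (hint 1 one_pos).integrableOn_Ioc tendsto_id ?_
  filter_upwards [eventually_gt_atTop 0] with T hT
  have hnorm : ∫ s in 0..T, ‖w s‖ = ∫ s in 0..T, w s := by
    simp only [intervalIntegral.integral_of_le hT.le]
    exact setIntegral_congr_fun measurableSet_Ioc fun s hs ↦ Real.norm_of_nonneg (hw s hs.1)
  have hT' : 0 < T⁻¹ := inv_pos.2 hT
  have htrunc : Real.exp (-1) * ∫ s in 0..T, w s ≤ C := by
    simpa [hT.ne'] using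
      (exp_neg_mul_mul_intervalIntegral_le_laplaceTransform hw hT'.le (hint _ hT') hT.le).trans
        (hC _ hT')
  rwa [hnorm, ← inv_mul_le_iff₀ (Real.exp_pos 1), ← Real.exp_neg]

lemma tendsto_laplaceTransform_nhdsGT_zero (hw : ∀ s ∈ Ioi (0 : ℝ), 0 ≤ w s)
    (hint : ∀ k > 0, LaplaceIntegrable w k) (hdiv : ¬IntegrableOn w (Ioi 0)) :
    Tendsto (laplaceTransform w) (𝓝[>] 0) atTop := by
  refine tendsto_atTop.2 fun C ↦ ?_
  obtain ⟨k, hk, hCk⟩ : ∃ k > 0, C < laplaceTransform w k := by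
    by_contra! hC
    exact hdiv (integrableOn_Ioi_of_laplaceTransform_le hw hint hC)
  filter_upwards [Ioo_mem_nhdsGT hk] with x hx
  exact hCk.le.trans (antitoneOn_laplaceTransform hw (hint x hx.1) (hint k hk) hx.2.le)

end LaplaceTransform

section HyperbolicWeight

variable {α p k : ℝ}

lemma laplaceIntegrable_one_add_mul_rpow_neg (hα : 0 ≤ α) (hp : 0 ≤ p) (hk : 0 < k) :
    LaplaceIntegrable (fun s ↦ (1 + α * s) ^ (-p)) k := by
  refine (exp_neg_integrableOn_Ioi 0 hk).bdd_mul (c := 1)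
    (Measurable.aestronglyMeasurable (by fun_prop)) ?_
  filter_upwards [ae_restrict_mem measurableSet_Ioi] with s hs
  have hbase : 1 ≤ 1 + α * s := le_add_of_nonneg_right (mul_nonneg hα (le_of_lt hs))
  rw [Real.norm_of_nonneg (by positivity)]
  exact Real.rpow_le_one_of_one_le_of_nonpos hbase (neg_nonpos.2 hp)

lemma integrableOn_Ioi_one_add_mul_rpow_iff (hα : 0 < α) :
    IntegrableOn (fun s ↦ (1 + α * s) ^ p) (Ioi 0) ↔ p < -1 := by
  have hshift : IntegrableOn (fun s : ℝ ↦ (1 + s) ^ p) (Ioi 0) ↔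
      IntegrableOn (fun s : ℝ ↦ s ^ p) (Ioi 1) := by
    simpa [Function.comp_def] using
      (measurePreserving_add_left volume (1 : ℝ)).integrableOn_comp_preimage
        (measurableEmbedding_addLeft 1) (f := fun s : ℝ ↦ s ^ p) (s := Ioi 1)
  rw [integrableOn_Ioi_comp_mul_left_iff (fun s ↦ (1 + s) ^ p) 0 hα, mul_zero, hshift,
    integrableOn_Ioi_rpow_iff one_pos]

end HyperbolicWeight

lemma exists_mem_Ioo_eq_of_tendsto {X Y : Type*} [ConditionallyCompleteLinearOrder X]
    [TopologicalSpace X] [OrderTopology X] [DenselyOrdered X]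
    [LinearOrder Y] [TopologicalSpace Y] [OrderClosedTopology Y] {f : X → Y} {a b : X}
    (hab : a < b) (hf : ContinuousOn f (Ioo a b)) (hbot : Tendsto f (𝓝[>] a) atBot)
    (htop : Tendsto f (𝓝[<] b) atTop) (c : Y) : ∃ x ∈ Ioo a b, f x = c :=
  have := nhdsGT_neBot_of_exists_gt ⟨b, hab⟩
  have := nhdsLT_neBot_of_exists_lt ⟨a, hab⟩
  isPreconnected_Ioo.intermediate_value_Iii (le_principal_iff.2 (Ioo_mem_nhdsGT hab))
    (le_principal_iff.2 (Ioo_mem_nhdsLT hab)) hf hbot htop (mem_univ c)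

section PropensityGap

variable {w : ℝ → ℝ} {γ ρ r lam : ℝ}

/-- The rate `ρ + (λ - r)(1 - γ)` at which future utility is effectively discounted when the
propensity to consume is the constant `λ`. -/
def effectiveDiscountRate (γ ρ r lam : ℝ) : ℝ := ρ + (lam - r) * (1 - γ)

/-- The function `f` whose zeros are the constant propensities to consume: the equation
`1 = λ ∫₀^∞ w(s) e^{-(ρ + (λ - r)(1 - γ)) s} ds` divided by `λ`, for a discount function
`w(s) e^{-ρ s}`. -/
noncomputable def propensityGap (w : ℝ → ℝ) (γ ρ r lam : ℝ) : ℝ :=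
  laplaceTransform w (effectiveDiscountRate γ ρ r lam) - 1 / lam

lemma effectiveDiscountRate_eq (hγ : γ ≠ 1) :
    effectiveDiscountRate γ ρ r lam = (γ - 1) * (r + ρ / (γ - 1) - lam) := by
  have : γ - 1 ≠ 0 := sub_ne_zero.2 hγ
  rw [effectiveDiscountRate]
  field_simp
  ring

lemma effectiveDiscountRate_pos_iff (hγ : 1 < γ) :
    0 < effectiveDiscountRate γ ρ r lam ↔ lam < r + ρ / (γ - 1) := by
  rw [effectiveDiscountRate_eq hγ.ne', mul_pos_iff_of_pos_left (sub_pos.2 hγ), sub_pos]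

lemma antitone_effectiveDiscountRate (hγ : 1 ≤ γ) : Antitone (effectiveDiscountRate γ ρ r) := by
  intro a b hab
  unfold effectiveDiscountRate
  nlinarith

lemma continuous_effectiveDiscountRate : Continuous (effectiveDiscountRate γ ρ r) := by
  unfold effectiveDiscountRate
  fun_prop

lemma tendsto_effectiveDiscountRate_nhdsLT (hγ : 1 < γ) :
    Tendsto (effectiveDiscountRate γ ρ r) (𝓝[<] (r + ρ / (γ - 1))) (𝓝[>] 0) := by
  refine tendsto_nhdsWithin_iff.2 ⟨?_, ?_⟩
  · refine (continuous_effectiveDiscountRate.tendsto' _ _ ?_).mono_left nhdsWithin_le_nhds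
    rw [effectiveDiscountRate_eq hγ.ne', sub_self, mul_zero]
  · filter_upwards [self_mem_nhdsWithin] with lam hlam
    exact (effectiveDiscountRate_pos_iff hγ).2 hlam

lemma continuousAt_laplaceTransform_effectiveDiscountRate (hγ : 1 < γ)
    (hint : ∀ k > 0, LaplaceIntegrable w k) (hlam : lam < r + ρ / (γ - 1)) :
    ContinuousAt (fun x ↦ laplaceTransform w (effectiveDiscountRate γ ρ r x)) lam := by
  have hpos := (effectiveDiscountRate_pos_iff hγ).2 hlam
  exact ((hint _ (half_pos hpos)).continuousAt_laplaceTransform (half_lt_self hpos)).comp'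
    continuous_effectiveDiscountRate.continuousAt

lemma strictMonoOn_propensityGap (hγ : 1 < γ) (hw : ∀ s ∈ Ioi (0 : ℝ), 0 ≤ w s)
    (hint : ∀ k > 0, LaplaceIntegrable w k) :
    StrictMonoOn (propensityGap w γ ρ r) (Ioo 0 (r + ρ / (γ - 1))) := by
  intro a ha b hb hab
  have hconv : ∀ x < r + ρ / (γ - 1), LaplaceIntegrable w (effectiveDiscountRate γ ρ r x) :=
    fun x hx ↦ hint _ ((effectiveDiscountRate_pos_iff hγ).2 hx)
  have hL := antitoneOn_laplaceTransform hw (hconv b hb.2) (hconv a ha.2)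
    (antitone_effectiveDiscountRate hγ.le hab.le)
  have hinv : 1 / b < 1 / a := one_div_lt_one_div_of_lt ha.1 hab
  unfold propensityGap
  linarith

lemma continuousOn_propensityGap (hγ : 1 < γ) (hint : ∀ k > 0, LaplaceIntegrable w k) :
    ContinuousOn (propensityGap w γ ρ r) (Ioo 0 (r + ρ / (γ - 1))) := fun _ hlam ↦
  ((continuousAt_laplaceTransform_effectiveDiscountRate hγ hint hlam.2).sub
    (continuousAt_const.div continuousAt_id hlam.1.ne')).continuousWithinAt

lemma tendsto_propensityGap_nhdsGT_zero (hγ : 1 < γ) (hM : 0 < r + ρ / (γ - 1))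
    (hint : ∀ k > 0, LaplaceIntegrable w k) :
    Tendsto (propensityGap w γ ρ r) (𝓝[>] 0) atBot := by
  have hL := (continuousAt_laplaceTransform_effectiveDiscountRate hγ hint hM).tendsto
  have hneg : Tendsto (fun lam : ℝ ↦ -(1 / lam)) (𝓝[>] 0) atBot := by
    simpa only [one_div, tendsto_neg_atBot_iff] using tendsto_inv_nhdsGT_zero
  exact (hL.mono_left nhdsWithin_le_nhds).add_atBot hneg

lemma tendsto_propensityGap_nhdsLT (hγ : 1 < γ) (hM : r + ρ / (γ - 1) ≠ 0)
    (hw : ∀ s ∈ Ioi (0 : ℝ), 0 ≤ w s) (hint : ∀ k > 0, LaplaceIntegrable w k)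
    (hdiv : ¬IntegrableOn w (Ioi 0)) :
    Tendsto (propensityGap w γ ρ r) (𝓝[<] (r + ρ / (γ - 1))) atTop := by
  have hL := (tendsto_laplaceTransform_nhdsGT_zero hw hint hdiv).comp
    (tendsto_effectiveDiscountRate_nhdsLT (ρ := ρ) (r := r) hγ)
  have hneg : ContinuousAt (fun lam : ℝ ↦ -(1 / lam)) (r + ρ / (γ - 1)) :=
    (continuousAt_const.div continuousAt_id hM).neg
  exact hL.atTop_add (hneg.tendsto.mono_left nhdsWithin_le_nhds)

end PropensityGap

theorem stmt15_general {w : ℝ → ℝ} {γ ρ r : ℝ} (hγ : 1 < γ) (hM : 0 < r + ρ / (γ - 1))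
    (hw : ∀ s ∈ Ioi (0 : ℝ), 0 ≤ w s) (hint : ∀ k > 0, LaplaceIntegrable w k)
    (hdiv : ¬IntegrableOn w (Ioi 0)) {f : ℝ → ℝ}
    (hf : ∀ lam, f lam =
      (∫ s in Ioi (0 : ℝ), w s * Real.exp (-(ρ + (lam - r) * (1 - γ)) * s)) - 1 / lam) :
    (∀ lam ∈ Ioo 0 (r + ρ / (γ - 1)),
      0 < ρ + (lam - r) * (1 - γ) ∧
      IntegrableOn (fun s ↦ w s * Real.exp (-(ρ + (lam - r) * (1 - γ)) * s)) (Ioi 0)) ∧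
    StrictMonoOn f (Ioo 0 (r + ρ / (γ - 1))) ∧
    Tendsto f (𝓝[>] 0) atBot ∧
    Tendsto f (𝓝[<] (r + ρ / (γ - 1))) atTop ∧
    ∃ lam₃ ∈ Ioo 0 (r + ρ / (γ - 1)),
      f lam₃ = 0 ∧ 0 < ρ + (lam₃ - r) * (1 - γ) ∧
      ∀ lam ∈ Ioo 0 (r + ρ / (γ - 1)), f lam = 0 → lam = lam₃ := by
  obtain rfl : f = propensityGap w γ ρ r := funext hf
  have hpos : ∀ lam ∈ Ioo 0 (r + ρ / (γ - 1)), 0 < ρ + (lam - r) * (1 - γ) :=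
    fun lam hlam ↦ (effectiveDiscountRate_pos_iff hγ).2 hlam.2
  have hmono := strictMonoOn_propensityGap (ρ := ρ) (r := r) hγ hw hint
  have hbot := tendsto_propensityGap_nhdsGT_zero hγ hM hint
  have htop := tendsto_propensityGap_nhdsLT hγ hM.ne' hw hint hdiv
  obtain ⟨lam₃, hlam₃, hzero⟩ :=
    exists_mem_Ioo_eq_of_tendsto hM (continuousOn_propensityGap hγ hint) hbot htop 0
  exact ⟨fun lam hlam ↦ ⟨hpos lam hlam, hint _ (hpos lam hlam)⟩, hmono, hbot, htop,
    lam₃, hlam₃, hzero, hpos lam₃ hlam₃,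
    fun lam hlam h ↦ hmono.injOn hlam hlam₃ (h.trans hzero.symm)⟩

/-- For the generalized hyperbolic discount function
`h(s) = (1+αs)^{−β/α}·e^{−ρs}` with `γ > 1`, `ρ > 0`, `r > 0`, `α, β > 0`, `β ≤ α`,
the function `f(λ) = ∫₀^∞ (1+αs)^{−β/α}·e^{−(ρ+(λ−r)(1−γ))s} ds − 1/λ` is well
defined (the exponent is positive, so the integral converges) and strictly increasing
on `(0, r+ρ/(γ−1))`, tends to `−∞` at `0⁺` and to `+∞` at the right endpoint; hence
it has a unique zero `λ₃` there, satisfying the integrability condition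
`ρ + (λ₃−r)(1−γ) > 0`. -/
theorem stmt15
    (γ ρ r α β : ℝ) (hγ : 1 < γ) (hρ : 0 < ρ) (hr : 0 < r)
    (hα : 0 < α) (hβ : 0 < β) (hβα : β ≤ α)
    (f : ℝ → ℝ)
    (hf : ∀ lam : ℝ, f lam =
      (∫ s in Set.Ioi (0:ℝ),
        (1 + α * s) ^ (-(β / α)) * Real.exp (-(ρ + (lam - r) * (1 - γ)) * s)) - 1 / lam) :
    -- positivity of the exponent and convergence of the integral on the interval
    (∀ lam ∈ Set.Ioo (0:ℝ) (r + ρ / (γ - 1)),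
      0 < ρ + (lam - r) * (1 - γ) ∧
      IntegrableOn
        (fun s => (1 + α * s) ^ (-(β / α)) * Real.exp (-(ρ + (lam - r) * (1 - γ)) * s))
        (Set.Ioi 0)) ∧
    -- `f` is strictly increasing on the interval
    StrictMonoOn f (Set.Ioo (0:ℝ) (r + ρ / (γ - 1))) ∧
    -- limits at the endpoints
    Filter.Tendsto f (nhdsWithin 0 (Set.Ioi 0)) Filter.atBot ∧
    Filter.Tendsto f
      (nhdsWithin (r + ρ / (γ - 1)) (Set.Iio (r + ρ / (γ - 1)))) Filter.atTop ∧
    -- existence and uniqueness of the zero `λ₃`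
    ∃ lam₃ ∈ Set.Ioo (0:ℝ) (r + ρ / (γ - 1)),
      f lam₃ = 0 ∧ 0 < ρ + (lam₃ - r) * (1 - γ) ∧
      ∀ lam ∈ Set.Ioo (0:ℝ) (r + ρ / (γ - 1)), f lam = 0 → lam = lam₃ := by
  have hdiv : ¬IntegrableOn (fun s ↦ (1 + α * s) ^ (-(β / α))) (Ioi 0) := by
    rw [integrableOn_Ioi_one_add_mul_rpow_iff hα, neg_lt_neg_iff, not_lt, div_le_one hα]
    exact hβα
  exact stmt15_general hγ (add_pos hr (div_pos hρ (sub_pos.2 hγ)))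
    (fun s hs ↦ Real.rpow_nonneg (by have := mem_Ioi.1 hs; positivity) _)
    (fun k hk ↦ laplaceIntegrable_one_add_mul_rpow_neg hα.le (div_nonneg hβ.le hα.le) hk) hdiv hf
end

section
/- Let ρ>0 and T>0, and suppose α and c are real numbers with α ≥ c > 0 and α·∫₀^T e^{(c−ρ−α)t} dt = 1 (this is equation (51) for the truncated exponential discount h(t)=e^{−ρt} for 0≤t≤T and h(t)=0 for t>T, with c playing the role of f′(k̄)). Then: (i) c−ρ−α ≤ −ρ < 0; (ii) (c−ρ)·e^{−(c−ρ)T} = α·e^{−αT}; (iii) 0 < c−ρ < 1/T, i.e. ρ < c < ρ + 1/T; and (iv) α > c−ρ, so that α·T = φ((c−ρ)·T), where φ is the second (decreasing) branch of the equation x·e^{−x} = y·e^{−y}. -/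
open MeasureTheory

/-!
With `β = c - ρ`, evaluating the integral turns the equilibrium equation into
`β * exp (-β * T) = α * exp (-α * T)`, so `β * T` and `α * T` have the same image under
`x ↦ x * exp (-x)`. This map increases strictly up to `1` and decreases strictly afterwards, so
each of its fibres has at most two points, and two distinct points of a fibre lie on opposite
sides of `1`. As `β < α`, this places `β * T` below `1` and makes `α * T` the only other point of
its fibre.
-/

open Set

theorem hasDerivAt_mul_exp_neg (x : ℝ) :
    HasDerivAt (fun y : ℝ => y * Real.exp (-y)) ((1 - x) * Real.exp (-x)) x := by
  refine ((hasDerivAt_id' x).fun_mul (hasDerivAt_neg x).exp).congr_deriv ?_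
  ring

theorem strictMonoOn_mul_exp_neg :
    StrictMonoOn (fun x : ℝ => x * Real.exp (-x)) (Iic 1) := by
  refine strictMonoOn_of_deriv_pos (convex_Iic 1) (by fun_prop) fun x hx => ?_
  rw [interior_Iic, mem_Iio] at hx
  rw [(hasDerivAt_mul_exp_neg x).deriv]
  exact mul_pos (sub_pos.mpr hx) (Real.exp_pos _)

theorem strictAntiOn_mul_exp_neg :
    StrictAntiOn (fun x : ℝ => x * Real.exp (-x)) (Ici 1) := by
  refine strictAntiOn_of_deriv_neg (convex_Ici 1) (by fun_prop) fun x hx => ?_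
  rw [interior_Ici, mem_Ioi] at hx
  rw [(hasDerivAt_mul_exp_neg x).deriv]
  exact mul_neg_of_neg_of_pos (sub_neg.mpr hx) (Real.exp_pos _)

theorem lt_one_and_one_lt_of_mul_exp_neg_eq {x y : ℝ} (hxy : x < y)
    (h : x * Real.exp (-x) = y * Real.exp (-y)) : x < 1 ∧ 1 < y := by
  constructor
  · by_contra! hx
    exact (strictAntiOn_mul_exp_neg hx (hx.trans hxy.le) hxy).ne' h
  · by_contra! hy
    exact (strictMonoOn_mul_exp_neg (hxy.le.trans hy) hy hxy).ne h

theorem eq_of_mul_exp_neg_eq_of_ne {x y z : ℝ} (hy : y ≠ x) (hz : z ≠ x)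
    (hyx : y * Real.exp (-y) = x * Real.exp (-x))
    (hzx : z * Real.exp (-z) = x * Real.exp (-x)) : y = z := by
  have hyz := hyx.trans hzx.symm
  rcases hy.lt_or_gt with hy | hy <;> rcases hz.lt_or_gt with hz | hz
  · have hy₁ := (lt_one_and_one_lt_of_mul_exp_neg_eq hy hyx).1
    have hz₁ := (lt_one_and_one_lt_of_mul_exp_neg_eq hz hzx).1
    exact strictMonoOn_mul_exp_neg.injOn hy₁.le hz₁.le hyz
  · have hx₁ := (lt_one_and_one_lt_of_mul_exp_neg_eq hy hyx).2
    exact absurd hx₁ (lt_one_and_one_lt_of_mul_exp_neg_eq hz hzx.symm).1.not_gt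
  · have hx₁ := (lt_one_and_one_lt_of_mul_exp_neg_eq hz hzx).2
    exact absurd hx₁ (lt_one_and_one_lt_of_mul_exp_neg_eq hy hyx.symm).1.not_gt
  · have hy₁ := (lt_one_and_one_lt_of_mul_exp_neg_eq hy hyx.symm).2
    have hz₁ := (lt_one_and_one_lt_of_mul_exp_neg_eq hz hzx.symm).2
    exact strictAntiOn_mul_exp_neg.injOn hy₁.le hz₁.le hyz

theorem integral_exp_const_mul {r : ℝ} (hr : r ≠ 0) (a b : ℝ) :
    ∫ t in a..b, Real.exp (r * t) = (Real.exp (r * b) - Real.exp (r * a)) / r := by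
  rw [intervalIntegral.integral_comp_mul_left Real.exp hr, integral_exp, smul_eq_mul,
    inv_mul_eq_div]

theorem mul_integral_exp_sub_mul_eq_one_iff {α β : ℝ} (hβα : β ≠ α) (T : ℝ) :
    α * ∫ t in (0 : ℝ)..T, Real.exp ((β - α) * t) = 1 ↔
      β * Real.exp (-β * T) = α * Real.exp (-α * T) := by
  have hexp : Real.exp (-α * T) = Real.exp ((β - α) * T) * Real.exp (-β * T) := by
    rw [← Real.exp_add]
    ring_nf
  calc α * ∫ t in (0 : ℝ)..T, Real.exp ((β - α) * t) = 1
    _ ↔ α * (Real.exp ((β - α) * T) - 1) = β - α := by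
      rw [integral_exp_const_mul (sub_ne_zero.mpr hβα), mul_zero, Real.exp_zero, mul_div_assoc',
        div_eq_one_iff_eq (sub_ne_zero.mpr hβα)]
    _ ↔ β = α * Real.exp ((β - α) * T) := by
      rw [mul_sub_one, sub_left_inj, eq_comm]
    _ ↔ β * Real.exp (-β * T) = α * Real.exp (-α * T) := by
      rw [hexp, ← mul_assoc, mul_left_inj' (Real.exp_ne_zero _)]

/-- For the truncated exponential discount
(`h(t) = e^{−ρt}` for `0 ≤ t ≤ T`, `h(t) = 0` for `t > T`), if `α ≥ c > 0` and
`α·∫₀^T e^{(c−ρ−α)t} dt = 1` (equation (51) with `c = f′(k̄)`), then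
(i) `c−ρ−α ≤ −ρ < 0`; (ii) `(c−ρ)·e^{−(c−ρ)T} = α·e^{−αT}`;
(iii) `0 < c−ρ < 1/T`; and (iv) `α > c−ρ`, so `αT = φ((c−ρ)T)` for the second,
decreasing branch `φ` of `x·e^{−x} = y·e^{−y}`. -/
theorem stmt17
    (ρ T α c : ℝ) (hρ : 0 < ρ) (hT : 0 < T)
    (hαc : c ≤ α) (hc : 0 < c)
    (heq : α * ∫ t in (0:ℝ)..T, Real.exp ((c - ρ - α) * t) = 1) :
    -- (i)
    c - ρ - α ≤ -ρ ∧
    -- (ii)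
    (c - ρ) * Real.exp (-(c - ρ) * T) = α * Real.exp (-α * T) ∧
    -- (iii)
    0 < c - ρ ∧ c - ρ < 1 / T ∧
    -- (iv)
    c - ρ < α ∧
    (∀ φ : ℝ → ℝ, StrictAntiOn φ (Set.Ioi 0) → φ 1 = 1 →
      (∀ x > (0:ℝ), 0 < φ x ∧
        φ x * Real.exp (-φ x) = x * Real.exp (-x) ∧ (x ≠ 1 → φ x ≠ x)) →
      α * T = φ ((c - ρ) * T)) := by
  have hβα : c - ρ < α := by linarith
  have hbal : (c - ρ) * Real.exp (-(c - ρ) * T) = α * Real.exp (-α * T) :=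
    (mul_integral_exp_sub_mul_eq_one_iff hβα.ne T).mp heq
  have hβ : 0 < c - ρ := by
    refine pos_of_mul_pos_left ?_ (Real.exp_nonneg (-(c - ρ) * T))
    exact hbal ▸ mul_pos (hc.trans_le hαc) (Real.exp_pos _)
  have hβT : (c - ρ) * T < α * T := mul_lt_mul_of_pos_right hβα hT
  have hfib : (c - ρ) * T * Real.exp (-((c - ρ) * T)) = α * T * Real.exp (-(α * T)) := by
    simp only [← neg_mul]
    linear_combination T * hbal
  have hβT_lt_one := (lt_one_and_one_lt_of_mul_exp_neg_eq hβT hfib).1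
  refine ⟨by linarith, hbal, hβ, (lt_div_iff₀ hT).mpr hβT_lt_one, hβα, fun φ _ _ hφ => ?_⟩
  obtain ⟨-, hφ_eq, hφ_ne⟩ := hφ _ (mul_pos hβ hT)
  exact eq_of_mul_exp_neg_eq_of_ne hβT.ne' (hφ_ne hβT_lt_one.ne) hfib.symm hφ_eq
end

section
/- Let 0<ρ₁≤ρ₂ and let h:[0,∞)→ℝ be a measurable function satisfying e^{−ρ₂t} ≤ h(t) ≤ e^{−ρ₁t} for all t≥0. Suppose α>0 and c∈ℝ are such that the function t ↦ h(t)·e^{(c−α)t} is integrable on [0,∞) and α·∫₀^∞ h(t)·e^{(c−α)t} dt = 1. Then ρ₁ ≤ c ≤ ρ₂. -/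
open MeasureTheory

/-!
On `(0, ∞)` the exponential `t ↦ exp (-s * t)` is integrable exactly when `0 < s`, and then its
integral is `s⁻¹`. The bounds on `h` squeeze the integrand of (51), whose integral is `α⁻¹`,
between the exponentials with decay rates `α + ρ₂ - c` and `α + ρ₁ - c`. The first rate is positive
because the integrand is integrable; if the second is not, then `ρ₁ < α + ρ₁ ≤ c`. Otherwise
comparing integrals and taking reciprocals gives `α + ρ₁ - c ≤ α ≤ α + ρ₂ - c`.
-/

theorem integrableOn_exp_mul_Ioi_iff {a b : ℝ} :
    IntegrableOn (fun t => Real.exp (a * t)) (Set.Ioi b) ↔ a < 0 := by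
  refine ⟨fun hint => ?_, fun ha => integrableOn_exp_mul_Ioi ha b⟩
  by_contra! ha
  have hconst : IntegrableOn (fun _ => Real.exp (a * b)) (Set.Ioi b) := by
    refine Integrable.mono' hint aestronglyMeasurable_const ?_
    filter_upwards [ae_restrict_mem measurableSet_Ioi] with t ht
    rw [Real.norm_of_nonneg (Real.exp_pos _).le]
    exact Real.exp_le_exp.mpr (mul_le_mul_of_nonneg_left (Set.mem_Ioi.mp ht).le ha)
  simp [integrableOn_const_iff] at hconst

theorem integral_Ioi_exp_neg_mul {s : ℝ} (hs : 0 < s) :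
    ∫ t in Set.Ioi (0 : ℝ), Real.exp (-s * t) = s⁻¹ := by
  rw [integral_exp_mul_Ioi (neg_lt_zero.mpr hs), mul_zero, Real.exp_zero, neg_div_neg_eq, one_div]

section ExponentialComparison

variable {f : ℝ → ℝ} {s : ℝ}

theorem integral_Ioi_le_inv_of_ae_le_exp (hs : 0 < s) (hf : IntegrableOn f (Set.Ioi 0))
    (hle : f ≤ᵐ[volume.restrict (Set.Ioi 0)] fun t => Real.exp (-s * t)) :
    ∫ t in Set.Ioi (0 : ℝ), f t ≤ s⁻¹ := by
  rw [← integral_Ioi_exp_neg_mul hs]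
  exact integral_mono_ae hf (integrableOn_exp_mul_Ioi (neg_lt_zero.mpr hs) 0) hle

theorem pos_of_exp_ae_le_of_integrableOn (hf : IntegrableOn f (Set.Ioi 0))
    (hle : (fun t => Real.exp (-s * t)) ≤ᵐ[volume.restrict (Set.Ioi 0)] f) : 0 < s := by
  have hexp : IntegrableOn (fun t => Real.exp (-s * t)) (Set.Ioi 0) :=
    Integrable.mono_nonneg hf (by fun_prop) (.of_forall fun _ => (Real.exp_pos _).le) hle
  exact neg_lt_zero.mp (integrableOn_exp_mul_Ioi_iff.mp hexp)

theorem inv_le_integral_Ioi_of_exp_ae_le (hf : IntegrableOn f (Set.Ioi 0))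
    (hle : (fun t => Real.exp (-s * t)) ≤ᵐ[volume.restrict (Set.Ioi 0)] f) :
    s⁻¹ ≤ ∫ t in Set.Ioi (0 : ℝ), f t := by
  have hs : 0 < s := pos_of_exp_ae_le_of_integrableOn hf hle
  rw [← integral_Ioi_exp_neg_mul hs]
  exact integral_mono_ae (integrableOn_exp_mul_Ioi (neg_lt_zero.mpr hs) 0) hf hle

end ExponentialComparison

section EquilibriumEquation

variable {h : ℝ → ℝ} {ρ α c : ℝ}

theorem exp_neg_mul_mul_exp_sub_mul (ρ α c t : ℝ) :
    Real.exp (-ρ * t) * Real.exp ((c - α) * t) = Real.exp (-(α + ρ - c) * t) := by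
  rw [← Real.exp_add]
  ring_nf

theorem le_of_discount_ae_le_exp
    (hupper : h ≤ᵐ[volume.restrict (Set.Ioi 0)] fun t => Real.exp (-ρ * t)) (hα : 0 < α)
    (hint : IntegrableOn (fun t => h t * Real.exp ((c - α) * t)) (Set.Ioi 0))
    (heq : α * ∫ t in Set.Ioi (0 : ℝ), h t * Real.exp ((c - α) * t) = 1) :
    ρ ≤ c := by
  rcases le_or_gt (α + ρ) c with hc | hc
  · linarith
  have hrate : 0 < α + ρ - c := sub_pos.mpr hc
  have hinv : α⁻¹ ≤ (α + ρ - c)⁻¹ := by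
    rw [← eq_inv_of_mul_eq_one_right heq]
    refine integral_Ioi_le_inv_of_ae_le_exp hrate hint ?_
    filter_upwards [hupper] with t ht
    rw [← exp_neg_mul_mul_exp_sub_mul]
    exact mul_le_mul_of_nonneg_right ht (Real.exp_pos _).le
  have hle : α + ρ - c ≤ α := (inv_le_inv₀ hα hrate).mp hinv
  linarith

theorem le_of_exp_ae_le_discount
    (hlower : (fun t => Real.exp (-ρ * t)) ≤ᵐ[volume.restrict (Set.Ioi 0)] h)
    (hint : IntegrableOn (fun t => h t * Real.exp ((c - α) * t)) (Set.Ioi 0))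
    (heq : α * ∫ t in Set.Ioi (0 : ℝ), h t * Real.exp ((c - α) * t) = 1) :
    c ≤ ρ := by
  have hexp : (fun t => Real.exp (-(α + ρ - c) * t)) ≤ᵐ[volume.restrict (Set.Ioi 0)]
      fun t => h t * Real.exp ((c - α) * t) := by
    filter_upwards [hlower] with t ht
    rw [← exp_neg_mul_mul_exp_sub_mul]
    exact mul_le_mul_of_nonneg_right ht (Real.exp_pos _).le
  have hrate : 0 < α + ρ - c := pos_of_exp_ae_le_of_integrableOn hint hexp
  have hinv : (α + ρ - c)⁻¹ ≤ α⁻¹ := by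
    rw [← eq_inv_of_mul_eq_one_right heq]
    exact inv_le_integral_Ioi_of_exp_ae_le hint hexp
  have hle : α ≤ α + ρ - c := (inv_inv α).symm.trans_le (inv_le_of_inv_le₀ hrate hinv)
  linarith

end EquilibriumEquation

theorem stmt19_general {ρ₁ ρ₂ : ℝ} {h : ℝ → ℝ}
    (hlower : (fun t => Real.exp (-ρ₂ * t)) ≤ᵐ[volume.restrict (Set.Ioi 0)] h)
    (hupper : h ≤ᵐ[volume.restrict (Set.Ioi 0)] fun t => Real.exp (-ρ₁ * t))
    {α c : ℝ} (hα : 0 < α)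
    (hint : IntegrableOn (fun t => h t * Real.exp ((c - α) * t)) (Set.Ioi 0))
    (heq : α * ∫ t in Set.Ioi (0 : ℝ), h t * Real.exp ((c - α) * t) = 1) :
    ρ₁ ≤ c ∧ c ≤ ρ₂ :=
  ⟨le_of_discount_ae_le_exp hupper hα hint heq, le_of_exp_ae_le_discount hlower hint heq⟩

/-- If the discount function is squeezed between two exponentials,
`e^{−ρ₂t} ≤ h(t) ≤ e^{−ρ₁t}` with `0 < ρ₁ ≤ ρ₂`, and `α > 0`, `c` satisfy
equation (51): `α·∫₀^∞ h(t)·e^{(c−α)t} dt = 1` (the integrand being integrable),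
then `ρ₁ ≤ c ≤ ρ₂`. -/
theorem stmt19
    (ρ₁ ρ₂ : ℝ) (hρ₁ : 0 < ρ₁) (hρ : ρ₁ ≤ ρ₂)
    (h : ℝ → ℝ) (hmeas : Measurable h)
    (hbound : ∀ t ≥ (0 : ℝ),
      Real.exp (-ρ₂ * t) ≤ h t ∧ h t ≤ Real.exp (-ρ₁ * t))
    (α c : ℝ) (hα : 0 < α)
    (hint : IntegrableOn (fun t => h t * Real.exp ((c - α) * t)) (Set.Ioi 0))
    (heq : α * ∫ t in Set.Ioi (0:ℝ), h t * Real.exp ((c - α) * t) = 1) :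
    ρ₁ ≤ c ∧ c ≤ ρ₂ :=
  stmt19_general
    (ae_restrict_of_forall_mem measurableSet_Ioi fun t ht => (hbound t (le_of_lt ht)).1)
    (ae_restrict_of_forall_mem measurableSet_Ioi fun t ht => (hbound t (le_of_lt ht)).2)
    hα hint heq
end
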